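/- Let R = ℂ[a_1,…,a_m] be graded by positive integer weights w_1,…,w_m, let g ≤ m, let f_1,…,f_{m−g} ∈ R be weighted-homogeneous of positive weighted degrees d_1,…,d_{m−g} such that the Krull dimension of A_0 = R/(f_1,…,f_{m−g}) is at most g. Let D_1,…,D_g be pairwise commuting ℂ-derivations of R, homogeneous of positive degrees e_1,…,e_g, with D_j f_k = 0 for all j, k, and let C_0^• be the Koszul-type complex on A_0 with C_0^k = A_0 ⊗ Λ^k ℂ^g and differential d = Σ_j D_j ⊗ (dz_j ∧ ·). Assume that H^g(C_0^•) = A_0/(D_1 A_0 + ⋯ + D_g A_0) is finite-dimensional over ℂ (Assumption 1). Then every cohomology group H^k(C_0^•), 0 ≤ k ≤ g, is finite-dimensional over ℂ, and the Euler characteristic satisfies Σ_{k=0}^g (−1)^k dim_ℂ H^k(C_0^•) = (−1)^g · (∏_{j=1}^{m−g} d_j) · (∏_{j=1}^{g} e_j) / (∏_{i=1}^{m} w_i). -/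

import Mathlib

open TensorProduct

noncomputable section

/-- The `k`-th exterior power `Λ^k V` of `V = ℂ^g`, as a submodule of the exterior algebra. -/
def ExtPow (g k : ℕ) : Submodule ℂ (ExteriorAlgebra ℂ (Fin g → ℂ)) := ⋀[ℂ]^k (Fin g → ℂ)

/-- Wedge (on the left) by the `j`-th basis vector `dz_j` of `V = ℂ^g`, as a linear map
`Λ^k V → Λ^{k+1} V`. -/
def wedgeBasis (g k : ℕ) (j : Fin g) : ExtPow g k →ₗ[ℂ] ExtPow g (k + 1) :=
  LinearMap.codRestrict _
    ((LinearMap.mulLeft ℂ (ExteriorAlgebra.ι ℂ (Pi.single j 1))).comp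
      (Submodule.subtype _))
    (fun x => by
      have h1 : ExteriorAlgebra.ι ℂ (Pi.single j (1 : ℂ) : Fin g → ℂ) ∈
          ⋀[ℂ]^1 (Fin g → ℂ) := by
        have h : (⋀[ℂ]^1 (Fin g → ℂ)) =
            LinearMap.range (ExteriorAlgebra.ι ℂ (M := Fin g → ℂ)) := pow_one _
        rw [h]
        exact LinearMap.mem_range_self _ _
      have hx : (x : ExteriorAlgebra ℂ (Fin g → ℂ)) ∈ ⋀[ℂ]^k (Fin g → ℂ) := x.2
      have := SetLike.mul_mem_graded h1 hx
      show _ ∈ ⋀[ℂ]^(k + 1) (Fin g → ℂ)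
      simpa [Nat.add_comm] using this)

variable (M : Type) [AddCommGroup M] [Module ℂ M]

/-- The space of `k`-cochains `C^k = M ⊗ Λ^k V` of the Koszul-type complex. -/
def KCochain (g k : ℕ) : Type := M ⊗[ℂ] ExtPow g k

instance (g k : ℕ) : AddCommGroup (KCochain M g k) :=
  inferInstanceAs (AddCommGroup (M ⊗[ℂ] ExtPow g k))

instance (g k : ℕ) : Module ℂ (KCochain M g k) :=
  inferInstanceAs (Module ℂ (M ⊗[ℂ] ExtPow g k))

variable {M}

/-- The `k`-th differential `d = Σ_j T_j ⊗ (dz_j ∧ ·) : C^k → C^{k+1}` of the Koszul-type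
cochain complex attached to the family of operators `T_j` on `M`. -/
def koszulD (g : ℕ) (T : Fin g → Module.End ℂ M) (k : ℕ) :
    KCochain M g k →ₗ[ℂ] KCochain M g (k + 1) :=
  ∑ j : Fin g, TensorProduct.map (T j) (wedgeBasis g k j)

/-- The differential of the Koszul-type complex arriving at `C^k`: it is `d^{k-1}` for
`k ≥ 1`, and the zero map (from `C^0`) for `k = 0`, so that its range is `0 ⊆ C^0`. -/
def koszulDInto (g : ℕ) (T : Fin g → Module.End ℂ M) :
    ∀ k : ℕ, KCochain M g (k - 1) →ₗ[ℂ] KCochain M g k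
  | 0 => 0
  | k + 1 => koszulD g T k

/-- The `k`-th cohomology `H^k = ker d^k / im d^{k-1}` of the Koszul-type cochain complex
`0 → M → M ⊗ V → ⋯ → M ⊗ Λ^g V → 0`. -/
def KoszulH (g : ℕ) (T : Fin g → Module.End ℂ M) (k : ℕ) : Type :=
  LinearMap.ker (koszulD g T k) ⧸
    Submodule.comap (LinearMap.ker (koszulD g T k)).subtype
      (LinearMap.range (koszulDInto g T k))

instance (g : ℕ) (T : Fin g → Module.End ℂ M) (k : ℕ) : AddCommGroup (KoszulH g T k) :=
  inferInstanceAs (AddCommGroup (_ ⧸ _))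

instance (g : ℕ) (T : Fin g → Module.End ℂ M) (k : ℕ) : Module ℂ (KoszulH g T k) :=
  inferInstanceAs (Module ℂ (_ ⧸ _))

open MvPolynomial

/-!
Since `dim A_0 ≤ g`, the ideal `(f_1, …, f_{m-g})` contains a regular sequence of length `m - g`:
after a generic linear change of coordinates some element of it is monic in the first variable,
which can then be eliminated without raising the dimension. Hence the Koszul complex of the `f_k`
is acyclic except in top degree, and the Hilbert series of `A_0` is
`∏ (1 - t ^ d_k) / ∏ (1 - t ^ w_i)`.

By a graded Nakayama argument for the polynomial ring `ℂ[D_1, …, D_g]`, Assumption 1 makes `A_0`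
a finite module over that Noetherian ring; each `D_j` is null-homotopic on the Koszul complex, so
the cohomology is a finite module on which the `D_j` act by zero, that is, a finite-dimensional
space. Comparing Hilbert series of cochains and cohomology presents the Euler characteristic as the
value at `t = 1` of `(-1) ^ g ∏ (1 - t ^ d_k) ∏ (1 - t ^ e_j) / ∏ (1 - t ^ w_i)`, where `1 - t`
occurs to the power `m` in both the numerator and the denominator.
-/

section RegularSequence

open RingTheory.Sequence

section LinearSubstitution

variable {σ A S : Type*} [CommSemiring A] [CommSemiring S] [Algebra A S] {q : σ → Polynomial S}

theorem natDegree_aeval_monomial_le (hq : ∀ i, (q i).natDegree ≤ 1) (v : σ →₀ ℕ) (a : A) :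
    (aeval q (monomial v a)).natDegree ≤ v.degree := by
  rw [aeval_monomial, IsScalarTower.algebraMap_apply A S, Polynomial.algebraMap_eq, Finsupp.prod]
  refine (Polynomial.natDegree_C_mul_le _ _).trans <|
    (Polynomial.natDegree_prod_le _ _).trans <| Finset.sum_le_sum fun i _ => ?_
  simpa using Polynomial.natDegree_pow_le_of_le (v i) (hq i)

theorem coeff_aeval_monomial_degree (hq : ∀ i, (q i).natDegree ≤ 1) (v : σ →₀ ℕ) (a : A) :
    (aeval q (monomial v a)).coeff v.degree =
      aeval (fun i => (q i).coeff 1) (monomial v a) := by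
  induction v using Finsupp.induction_linear generalizing a with
  | zero => simp [IsScalarTower.algebraMap_apply A S (Polynomial S)]
  | add u v hu hv =>
    have hmul : monomial (u + v) a = monomial u a * monomial v (1 : A) := by
      rw [monomial_mul, mul_one]
    rw [hmul, map_mul, map_mul, map_add, ← hu, ← hv, Polynomial.coeff_mul_add_eq_of_natDegree_le
      (natDegree_aeval_monomial_le hq u a) (natDegree_aeval_monomial_le hq v 1)]
  | single i n =>
    have hpow : (q i ^ n).coeff n = (q i).coeff 1 ^ n := by
      simpa using Polynomial.coeff_pow_of_natDegree_le (m := n) (hq i)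
    simp [aeval_monomial, hpow, IsScalarTower.algebraMap_apply A S (Polynomial S)]

theorem natDegree_aeval_le_totalDegree (hq : ∀ i, (q i).natDegree ≤ 1) (p : MvPolynomial σ A) :
    (aeval q p).natDegree ≤ p.totalDegree := by
  conv_lhs => rw [p.as_sum, map_sum]
  exact Polynomial.natDegree_sum_le_of_forall_le _ _ fun v hv =>
    (natDegree_aeval_monomial_le hq v _).trans (le_totalDegree hv)

theorem coeff_aeval_eq_aeval_homogeneousComponent (hq : ∀ i, (q i).natDegree ≤ 1)
    (p : MvPolynomial σ A) :
    (aeval q p).coeff p.totalDegree =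
      aeval (fun i => (q i).coeff 1) (homogeneousComponent p.totalDegree p) := by
  conv_lhs => enter [1]; rw [p.as_sum, map_sum]
  rw [Polynomial.finsetSum_coeff, homogeneousComponent_apply, Finset.sum_filter, map_sum]
  refine Finset.sum_congr rfl fun v hv => ?_
  split_ifs with hdeg
  · rw [← hdeg, coeff_aeval_monomial_degree hq]
  · have hlt : v.degree < p.totalDegree := lt_of_le_of_ne (le_totalDegree hv) hdeg
    rw [map_zero]
    exact Polynomial.coeff_eq_zero_of_natDegree_lt
      ((natDegree_aeval_monomial_le hq v _).trans_lt hlt)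

end LinearSubstitution

section Shear

variable {k : Type*} [Field k] {n : ℕ}

/-- The substitution `x₀ ↦ x₀`, `xᵢ ↦ xᵢ + cᵢ x₀` for `i ≥ 1`. -/
def shearHom (c : Fin n → k) : MvPolynomial (Fin (n + 1)) k →ₐ[k] MvPolynomial (Fin (n + 1)) k :=
  aeval (Fin.cons (X 0) fun i => X i.succ + C (c i) * X 0)

theorem shearHom_comp_neg (c : Fin n → k) :
    (shearHom c).comp (shearHom (-c)) = AlgHom.id k (MvPolynomial (Fin (n + 1)) k) := by
  ext i : 1
  cases i using Fin.cases <;> simp [shearHom, algebraMap_eq]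

/-- `k[x₀, …, xₙ] ≃ k[x₁, …, xₙ][X]` by `x₀ ↦ X`, `xᵢ ↦ xᵢ + cᵢ X`: the change of variables
putting a polynomial in general position with respect to `x₀`. -/
def shearEquiv (c : Fin n → k) :
    MvPolynomial (Fin (n + 1)) k ≃ₐ[k] Polynomial (MvPolynomial (Fin n) k) :=
  (AlgEquiv.ofAlgHom (shearHom c) (shearHom (-c)) (shearHom_comp_neg c)
    (by simpa using shearHom_comp_neg (-c))).trans (finSuccEquiv k n)

theorem shearEquiv_apply (c : Fin n → k) (p : MvPolynomial (Fin (n + 1)) k) :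
    shearEquiv c p = aeval (Fin.cons Polynomial.X fun i =>
      Polynomial.C (X i) + Polynomial.C (C (c i)) * Polynomial.X) p := by
  refine DFunLike.congr_fun (f := (shearEquiv c).toAlgHom) (algHom_ext fun i => ?_) p
  cases i using Fin.cases <;>
    simp [shearEquiv, shearHom, finSuccEquiv_apply]

theorem eval_smul_of_isHomogeneous {σ A : Type*} [CommSemiring A] {F : MvPolynomial σ A} {d : ℕ}
    (hF : F.IsHomogeneous d) (r : A) (a : σ → A) : eval (r • a) F = r ^ d * eval a F := by
  rw [eval_eq, eval_eq, Finset.mul_sum]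
  refine Finset.sum_congr rfl fun v hv => ?_
  have hdeg : ∑ i ∈ v.support, v i = d :=
    (hF.degree_eq_sum_deg_support hv).symm
  simp only [Pi.smul_apply, smul_eq_mul, mul_pow, Finset.prod_mul_distrib,
    Finset.prod_pow_eq_pow_sum, hdeg]
  ring

theorem homogeneousComponent_totalDegree_ne_zero {σ A : Type*} [CommSemiring A]
    {p : MvPolynomial σ A} (hp : p ≠ 0) : homogeneousComponent p.totalDegree p ≠ 0 := by
  obtain ⟨v, hv, hdeg⟩ := p.support.exists_mem_eq_sup (support_nonempty.mpr hp) Finsupp.degree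
  have hcoeff : coeff v (homogeneousComponent p.totalDegree p) = coeff v p := by
    rw [coeff_homogeneousComponent, if_pos]
    exact hdeg.symm
  intro h
  rw [h, coeff_zero] at hcoeff
  exact mem_support_iff.mp hv hcoeff.symm

theorem exists_eval_cons_one_ne_zero [Infinite k] {F : MvPolynomial (Fin (n + 1)) k} {d : ℕ}
    (hF : F.IsHomogeneous d) (hF0 : F ≠ 0) :
    ∃ c : Fin n → k, eval (Fin.cons 1 c : Fin (n + 1) → k) F ≠ 0 := by
  obtain ⟨a, ha⟩ : ∃ a, eval a (X 0 * F) ≠ 0 := by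
    by_contra! h
    exact mul_ne_zero (X_ne_zero 0) hF0 (funext fun a => by simpa using h a)
  rw [map_mul, eval_X] at ha
  refine ⟨fun i => (a 0)⁻¹ * a i.succ, fun h => right_ne_zero_of_mul ha ?_⟩
  have hsmul : a = a 0 • (Fin.cons 1 fun i => (a 0)⁻¹ * a i.succ : Fin (n + 1) → k) := by
    funext i
    cases i using Fin.cases <;> simp [left_ne_zero_of_mul ha]
  rw [hsmul, eval_smul_of_isHomogeneous hF, h, mul_zero]

theorem exists_isUnit_leadingCoeff_shearEquiv [Infinite k] {p : MvPolynomial (Fin (n + 1)) k}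
    (hp : p ≠ 0) : ∃ c : Fin n → k, IsUnit (shearEquiv c p).leadingCoeff := by
  obtain ⟨c, hc⟩ := exists_eval_cons_one_ne_zero (homogeneousComponent_isHomogeneous _ p)
    (homogeneousComponent_totalDegree_ne_zero hp)
  set q : Fin (n + 1) → Polynomial (MvPolynomial (Fin n) k) := Fin.cons Polynomial.X fun i =>
    Polynomial.C (X i) + Polynomial.C (C (c i)) * Polynomial.X with hqdef
  have hq : ∀ i, (q i).natDegree ≤ 1 := by
    intro i
    cases i using Fin.cases with
    | zero => simp [hqdef]
    | succ i => simp only [hqdef, Fin.cons_succ]; compute_degree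
  have hq1 : (fun i => (q i).coeff 1) = algebraMap k _ ∘ (Fin.cons 1 c : Fin (n + 1) → k) := by
    funext i
    cases i using Fin.cases <;> simp [hqdef, algebraMap_eq, Polynomial.coeff_X]
  have hcoeff : IsUnit ((aeval q p).coeff p.totalDegree) := by
    rw [coeff_aeval_eq_aeval_homogeneousComponent hq, hq1, aeval_algebraMap_apply]
    exact hc.isUnit.map _
  refine ⟨c, ?_⟩
  rwa [shearEquiv_apply, Polynomial.leadingCoeff, le_antisymm
    (natDegree_aeval_le_totalDegree hq p) (Polynomial.le_natDegree_of_ne_zero hcoeff.ne_zero)]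

end Shear

theorem isSMulRegular_quotient_map_C {S : Type*} [CommRing S] (J : Ideal S) {p : Polynomial S}
    (hp : IsUnit p.leadingCoeff) :
    IsSMulRegular (Polynomial S ⧸ J.map Polynomial.C) p := by
  have hmem (q : Polynomial S) : q ∈ J.map Polynomial.C ↔ q.map (Ideal.Quotient.mk J) = 0 := by
    simp [Ideal.mem_map_C_iff, Polynomial.ext_iff, Ideal.Quotient.eq_zero_iff_mem]
  have hmap : IsUnit (p.map (Ideal.Quotient.mk J)).leadingCoeff := by
    obtain hJ | hJ := subsingleton_or_nontrivial (S ⧸ J)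
    · exact isUnit_of_subsingleton _
    · rw [Polynomial.leadingCoeff_map_of_leadingCoeff_ne_zero _ (hp.map _).ne_zero]
      exact hp.map _
  rw [isSMulRegular_iff_right_eq_zero_of_smul]
  intro x hx
  obtain ⟨q, rfl⟩ := Submodule.Quotient.mk_surjective _ x
  rw [← Submodule.Quotient.mk_smul, Submodule.Quotient.mk_eq_zero, hmem, smul_eq_mul,
    Polynomial.map_mul, Polynomial.isUnit_leadingCoeff_mul_right_eq_zero_iff hmap] at hx
  rwa [Submodule.Quotient.mk_eq_zero, hmem]

theorem ringKrullDim_le_of_isIntegral {S A : Type*} [CommRing S] [CommRing A] [Algebra S A]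
    [Algebra.IsIntegral S A] (hinj : Function.Injective (algebraMap S A)) :
    ringKrullDim S ≤ ringKrullDim A := by
  refine iSup_le fun l => ?_
  obtain ⟨Q, -, hQ, hQc⟩ := Ideal.exists_ideal_over_prime_of_isIntegral l.head.asIdeal (⊥ : Ideal A)
    (by rw [← RingHom.ker_eq_comap_bot, (RingHom.injective_iff_ker_eq_bot _).mp hinj]; exact bot_le)
  have : Q.LiesOver l.head.asIdeal := ⟨hQc.symm⟩
  obtain ⟨L, hL, -⟩ := Ideal.exists_ltSeries_of_hasGoingUp l Q
  rw [← hL]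
  exact le_iSup (fun L : LTSeries (PrimeSpectrum A) => (L.length : WithBot ℕ∞)) L

theorem ringKrullDim_quotient_comap_C_le {S : Type*} [CommRing S] {J : Ideal (Polynomial S)}
    {p : Polynomial S} (hp : IsUnit p.leadingCoeff) (hpJ : p ∈ J) :
    ringKrullDim (S ⧸ J.comap Polynomial.C) ≤ ringKrullDim (Polynomial S ⧸ J) := by
  let φ : S ⧸ J.comap Polynomial.C →+* Polynomial S ⧸ J :=
    Ideal.quotientMap J Polynomial.C le_rfl
  algebraize [φ]
  have hint : φ.IsIntegral := by
    have hcomp : (φ.comp (Ideal.Quotient.mk _)).IsIntegral :=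
      (Polynomial.monic_of_isUnit_leadingCoeff_inv_smul hp).quotient_isIntegral
        (Submodule.smul_of_tower_mem _ _ hpJ)
    exact hcomp.tower_top _ _
  have : Algebra.IsIntegral (S ⧸ J.comap Polynomial.C) (Polynomial S ⧸ J) := ⟨hint⟩
  exact ringKrullDim_le_of_isIntegral (Ideal.quotientMap_injective)

theorem exists_isWeaklyRegular_of_comap_C {S : Type*} [CommRing S] {J : Ideal (Polynomial S)}
    {p : Polynomial S} (hp : IsUnit p.leadingCoeff) (hpJ : p ∈ J) {rs : List S}
    (hrs : IsWeaklyRegular S rs) (hrsJ : ∀ r ∈ rs, r ∈ J.comap Polynomial.C) :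
    ∃ ps : List (Polynomial S), ps.length = rs.length + 1 ∧ (∀ q ∈ ps, q ∈ J) ∧
      IsWeaklyRegular (Polynomial S) ps := by
  refine ⟨rs.map Polynomial.C ++ [p], by simp, ?_, ?_⟩
  · simpa [or_imp, forall_and, hpJ] using hrsJ
  · rw [isWeaklyRegular_append_iff, isWeaklyRegular_singleton_iff]
    refine ⟨hrs.of_flat, ?_⟩
    rw [← Ideal.map_ofList, smul_eq_mul, Ideal.mul_top]
    exact isSMulRegular_quotient_map_C _ hp

theorem exists_mem_ne_zero_of_ringKrullDim_quotient_le {k : Type*} [Field k] {m g : ℕ}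
    (hgm : g < m) {I : Ideal (MvPolynomial (Fin m) k)}
    (hdim : ringKrullDim (MvPolynomial (Fin m) k ⧸ I) ≤ g) : ∃ p ∈ I, p ≠ 0 := by
  by_contra! h
  obtain rfl : I = ⊥ := (Submodule.eq_bot_iff I).mpr h
  rw [ringKrullDim_eq_of_ringEquiv (RingEquiv.quotientBot _), ringKrullDim_of_isNoetherianRing,
    ringKrullDim_eq_zero_of_field, zero_add, Nat.card_fin] at hdim
  have hle : m ≤ g := by exact_mod_cast hdim
  omega

theorem exists_isWeaklyRegular_of_ringKrullDim_quotient_le {k : Type*} [Field k] [Infinite k]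
    {m c g : ℕ} (hcg : c + g = m) (I : Ideal (MvPolynomial (Fin m) k))
    (hdim : ringKrullDim (MvPolynomial (Fin m) k ⧸ I) ≤ g) :
    ∃ rs : List (MvPolynomial (Fin m) k), rs.length = c ∧ (∀ r ∈ rs, r ∈ I) ∧
      IsWeaklyRegular (MvPolynomial (Fin m) k) rs := by
  induction m generalizing c with
  | zero => exact ⟨[], (Nat.eq_zero_of_add_eq_zero_right hcg).symm, by simp, .nil _ _⟩
  | succ n ih =>
    obtain _ | c := c
    · exact ⟨[], rfl, by simp, .nil _ _⟩
    obtain ⟨p, hpI, hp⟩ := exists_mem_ne_zero_of_ringKrullDim_quotient_le (by omega) hdim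
    obtain ⟨a, ha⟩ := exists_isUnit_leadingCoeff_shearEquiv hp
    set J := I.map (shearEquiv a)
    have hpJ : shearEquiv a p ∈ J := Ideal.mem_map_of_mem _ hpI
    have hdimJ : ringKrullDim (Polynomial (MvPolynomial (Fin n) k) ⧸ J) ≤ g := by
      rwa [← ringKrullDim_eq_of_ringEquiv
        (Ideal.quotientEquiv I J (shearEquiv a).toRingEquiv rfl)]
    obtain ⟨rs, hlen, hrsJ, hrs⟩ := ih (c := c) (by omega) _
      ((ringKrullDim_quotient_comap_C_le ha hpJ).trans hdimJ)
    obtain ⟨ps, hps, hpsJ, hpsreg⟩ := exists_isWeaklyRegular_of_comap_C ha hpJ hrs hrsJ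
    refine ⟨ps.map (shearEquiv a).symm, by rw [List.length_map, hps, hlen], ?_, ?_⟩
    · intro r hr
      obtain ⟨q, hq, rfl⟩ := List.mem_map.mp hr
      obtain ⟨r, hr, rfl⟩ := (Ideal.mem_map_of_equiv _ _).mp (hpsJ q hq)
      rwa [AlgEquiv.symm_apply_apply]
    · refine (AddEquiv.isWeaklyRegular_congr (e := (shearEquiv a).symm.toAddEquiv) ?_).mp hpsreg
      rw [List.forall₂_map_right_iff, List.forall₂_same]
      exact fun x _ y => map_mul (shearEquiv a).symm x y

end RegularSequence

section KoszulComplex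

section Contraction

variable {g : ℕ}

/-- Contraction of the exterior algebra of `V = ℂ^g` against the `j`-th coordinate function. -/
def contractCoord (j : Fin g) :
    ExteriorAlgebra ℂ (Fin g → ℂ) →ₗ[ℂ] ExteriorAlgebra ℂ (Fin g → ℂ) :=
  CliffordAlgebra.contractLeft (Q := (0 : QuadraticForm ℂ (Fin g → ℂ))) (LinearMap.proj j)

theorem contractCoord_ι_mul (j : Fin g) (a : Fin g → ℂ) (b : ExteriorAlgebra ℂ (Fin g → ℂ)) :
    contractCoord j (ExteriorAlgebra.ι ℂ a * b) =
      a j • b - ExteriorAlgebra.ι ℂ a * contractCoord j b :=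
  CliffordAlgebra.contractLeft_ι_mul _ _ _

theorem contractCoord_of_mem_extPow_zero (j : Fin g) {x : ExteriorAlgebra ℂ (Fin g → ℂ)}
    (hx : x ∈ ExtPow g 0) : contractCoord j x = 0 := by
  rw [ExtPow, ExteriorAlgebra.exteriorPower, pow_zero] at hx
  obtain ⟨r, rfl⟩ := Submodule.mem_one.mp hx
  exact CliffordAlgebra.contractLeft_algebraMap _ _ _

theorem contractCoord_mem_extPow (j : Fin g) {k : ℕ} {x : ExteriorAlgebra ℂ (Fin g → ℂ)}
    (hx : x ∈ ExtPow g (k + 1)) : contractCoord j x ∈ ExtPow g k := by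
  induction k generalizing x with
  | zero =>
    rw [ExtPow, ExteriorAlgebra.exteriorPower, pow_succ'] at hx
    induction hx using Submodule.mul_induction_on' with
    | mem_mul_mem a ha b hb =>
      obtain ⟨a, rfl⟩ := ha
      rw [contractCoord_ι_mul, contractCoord_of_mem_extPow_zero j hb, mul_zero, sub_zero]
      exact Submodule.smul_mem _ _ hb
    | add x _ y _ hx hy => rw [map_add]; exact Submodule.add_mem _ hx hy
  | succ k ih =>
    rw [ExtPow, ExteriorAlgebra.exteriorPower, pow_succ'] at hx
    induction hx using Submodule.mul_induction_on' with
    | mem_mul_mem a ha b hb =>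
      obtain ⟨a, rfl⟩ := ha
      rw [contractCoord_ι_mul]
      refine Submodule.sub_mem _ (Submodule.smul_mem _ _ hb) ?_
      rw [ExtPow, ExteriorAlgebra.exteriorPower, pow_succ']
      exact Submodule.mul_mem_mul (LinearMap.mem_range_self _ _) (ih hb)
    | add x _ y _ hx hy => rw [map_add]; exact Submodule.add_mem _ hx hy

/-- Contraction `Λ^{k+1} V → Λ^k V` against the `j`-th coordinate function of `V = ℂ^g`. -/
def contractBasis (g k : ℕ) (j : Fin g) : ExtPow g (k + 1) →ₗ[ℂ] ExtPow g k :=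
  (contractCoord j).restrict fun _ => contractCoord_mem_extPow j

theorem contractBasis_zero_wedgeBasis (i j : Fin g) (p : ExtPow g 0) :
    contractBasis g 0 i (wedgeBasis g 0 j p) = if i = j then p else 0 := by
  refine Subtype.ext ?_
  change contractCoord i (ExteriorAlgebra.ι ℂ (Pi.single j 1) * p.1) = _
  rw [contractCoord_ι_mul, contractCoord_of_mem_extPow_zero i p.2, Pi.single_apply]
  split_ifs <;> simp

theorem contractBasis_wedgeBasis_add {k : ℕ} (i j : Fin g) (p : ExtPow g (k + 1)) :
    contractBasis g (k + 1) i (wedgeBasis g (k + 1) j p) +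
      wedgeBasis g k j (contractBasis g k i p) = if i = j then p else 0 := by
  refine Subtype.ext ?_
  change contractCoord i (ExteriorAlgebra.ι ℂ (Pi.single j 1) * p.1) +
    ExteriorAlgebra.ι ℂ (Pi.single j 1) * contractCoord i p.1 = _
  rw [contractCoord_ι_mul, sub_add_cancel, Pi.single_apply]
  split_ifs <;> simp

theorem wedgeBasis_wedgeBasis {k : ℕ} (i j : Fin g) (p : ExtPow g k) :
    wedgeBasis g (k + 1) i (wedgeBasis g k j p) = -wedgeBasis g (k + 1) j (wedgeBasis g k i p) := by
  refine Subtype.ext (eq_neg_of_add_eq_zero_left ?_)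
  change ExteriorAlgebra.ι ℂ (Pi.single i 1) * (ExteriorAlgebra.ι ℂ (Pi.single j 1) * p.1) +
    ExteriorAlgebra.ι ℂ (Pi.single j 1) * (ExteriorAlgebra.ι ℂ (Pi.single i 1) * p.1) = 0
  rw [← mul_assoc, ← mul_assoc, ← add_mul, ExteriorAlgebra.ι_add_mul_swap, zero_mul]

end Contraction

variable {N N' : Type} [AddCommGroup N] [Module ℂ N] [AddCommGroup N'] [Module ℂ N'] {g : ℕ}

namespace KCochain

/-- The pure tensor `x ⊗ p` as a cochain, bilinearly in `x` and `p`. -/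
def pure (N : Type) [AddCommGroup N] [Module ℂ N] (g k : ℕ) :
    N →ₗ[ℂ] ExtPow g k →ₗ[ℂ] KCochain N g k :=
  TensorProduct.mk ℂ N (ExtPow g k)

theorem hom_ext {k : ℕ} {P : Type*} [AddCommGroup P] [Module ℂ P] {φ ψ : KCochain N g k →ₗ[ℂ] P}
    (h : ∀ x p, φ (pure N g k x p) = ψ (pure N g k x p)) : φ = ψ :=
  TensorProduct.ext' h

/-- The map `φ ⊗ ω` of cochains. -/
def tensorMap {k l : ℕ} (φ : N →ₗ[ℂ] N') (ω : ExtPow g k →ₗ[ℂ] ExtPow g l) :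
    KCochain N g k →ₗ[ℂ] KCochain N' g l :=
  TensorProduct.map φ ω

theorem tensorMap_pure {k l : ℕ} (φ : N →ₗ[ℂ] N') (ω : ExtPow g k →ₗ[ℂ] ExtPow g l) (x : N)
    (p : ExtPow g k) : tensorMap φ ω (pure N g k x p) = pure N' g l (φ x) (ω p) := rfl

/-- The map of `k`-cochains induced by a linear map of coefficient spaces. -/
def mapCoeff (φ : N →ₗ[ℂ] N') (g k : ℕ) : KCochain N g k →ₗ[ℂ] KCochain N' g k :=
  φ.rTensor (ExtPow g k)

theorem mapCoeff_pure (φ : N →ₗ[ℂ] N') {k : ℕ} (x : N) (p : ExtPow g k) :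
    mapCoeff φ g k (pure N g k x p) = pure N' g k (φ x) p := rfl

theorem mapCoeff_injective {φ : N →ₗ[ℂ] N'} (hφ : Function.Injective φ) (k : ℕ) :
    Function.Injective (mapCoeff φ g k) :=
  Module.Flat.rTensor_preserves_injective_linearMap φ hφ

theorem mapCoeff_surjective {φ : N →ₗ[ℂ] N'} (hφ : Function.Surjective φ) (k : ℕ) :
    Function.Surjective (mapCoeff φ g k) :=
  LinearMap.rTensor_surjective _ hφ

theorem mapCoeff_exact {N'' : Type} [AddCommGroup N''] [Module ℂ N''] {φ : N →ₗ[ℂ] N'}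
    {ψ : N' →ₗ[ℂ] N''} (hφψ : Function.Exact φ ψ) (hψ : Function.Surjective ψ) (k : ℕ) :
    Function.Exact (mapCoeff φ g k) (mapCoeff ψ g k) :=
  rTensor_exact _ hφψ hψ

end KCochain

open KCochain

theorem koszulD_pure (T : Fin g → Module.End ℂ N) {k : ℕ} (x : N) (p : ExtPow g k) :
    koszulD g T k (pure N g k x p) = ∑ j, pure N g (k + 1) (T j x) (wedgeBasis g k j p) := by
  have hD : koszulD g T k = ∑ j, tensorMap (T j) (wedgeBasis g k j) := rfl
  simp only [hD, LinearMap.sum_apply, tensorMap_pure]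

theorem koszulD_map {T : Fin g → Module.End ℂ N} {T' : Fin g → Module.End ℂ N'} {φ : N →ₗ[ℂ] N'}
    (hφ : ∀ j x, φ (T j x) = T' j (φ x)) {k : ℕ} (z : KCochain N g k) :
    koszulD g T' k (mapCoeff φ g k z) = mapCoeff φ g (k + 1) (koszulD g T k z) := by
  refine LinearMap.congr_fun (f := koszulD g T' k ∘ₗ mapCoeff φ g k)
    (g := mapCoeff φ g (k + 1) ∘ₗ koszulD g T k) (hom_ext fun x p => ?_) z
  simp only [LinearMap.comp_apply, mapCoeff_pure, koszulD_pure, map_sum, hφ]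

theorem koszulDInto_map {T : Fin g → Module.End ℂ N} {T' : Fin g → Module.End ℂ N'}
    {φ : N →ₗ[ℂ] N'} (hφ : ∀ j x, φ (T j x) = T' j (φ x)) {k : ℕ} (z : KCochain N g (k - 1)) :
    koszulDInto g T' k (mapCoeff φ g (k - 1) z) = mapCoeff φ g k (koszulDInto g T k z) := by
  cases k with
  | zero => exact (map_zero (mapCoeff φ g 0)).symm
  | succ k => exact koszulD_map hφ z

theorem koszulD_koszulD {T : Fin g → Module.End ℂ N} (hT : ∀ i j, Commute (T i) (T j)) {k : ℕ}
    (z : KCochain N g k) : koszulD g T (k + 1) (koszulD g T k z) = 0 := by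
  refine LinearMap.congr_fun (f := koszulD g T (k + 1) ∘ₗ koszulD g T k) (g := 0)
    (hom_ext fun x p => ?_) z
  have hanti (i j : Fin g) :
      pure N g (k + 2) (T i (T j x)) (wedgeBasis g (k + 1) i (wedgeBasis g k j p)) =
        -pure N g (k + 2) (T j (T i x)) (wedgeBasis g (k + 1) j (wedgeBasis g k i p)) := by
    rw [wedgeBasis_wedgeBasis i j, map_neg, ← Module.End.mul_apply, (hT i j).eq,
      Module.End.mul_apply]
  simp only [LinearMap.comp_apply, koszulD_pure, map_sum, LinearMap.zero_apply]
  have : IsAddTorsionFree (KCochain N g (k + 2)) := .of_isTorsionFree ℂ _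
  refine self_eq_neg.mp ?_
  conv_rhs => rw [Finset.sum_comm, ← Finset.sum_neg_distrib]
  refine Finset.sum_congr rfl fun j _ => ?_
  rw [← Finset.sum_neg_distrib]
  exact Finset.sum_congr rfl fun i _ => hanti i j

theorem range_koszulDInto_le_ker {T : Fin g → Module.End ℂ N} (hT : ∀ i j, Commute (T i) (T j))
    (k : ℕ) : LinearMap.range (koszulDInto g T k) ≤ LinearMap.ker (koszulD g T k) := by
  rintro _ ⟨z, rfl⟩
  cases k with
  | zero => exact map_zero _
  | succ k => exact koszulD_koszulD hT z

/-- The homotopy `Σ_j S_j ⊗ (∂/∂z_j ⌟ ·) : C^{k+1} → C^k` attached to operators `S_j`. -/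
def koszulContract (g : ℕ) (S : Fin g → Module.End ℂ N) (k : ℕ) :
    KCochain N g (k + 1) →ₗ[ℂ] KCochain N g k :=
  ∑ j : Fin g, tensorMap (S j) (contractBasis g k j)

theorem koszulContract_pure (S : Fin g → Module.End ℂ N) {k : ℕ} (x : N)
    (p : ExtPow g (k + 1)) :
    koszulContract g S k (pure N g (k + 1) x p) =
      ∑ j, pure N g k (S j x) (contractBasis g k j p) := by
  simp only [koszulContract, LinearMap.sum_apply, tensorMap_pure]

theorem koszulContract_koszulD_zero {S T : Fin g → Module.End ℂ N} (z : KCochain N g 0) :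
    koszulContract g S 0 (koszulD g T 0 z) = mapCoeff (∑ j, S j * T j) g 0 z := by
  refine LinearMap.congr_fun (f := koszulContract g S 0 ∘ₗ koszulD g T 0)
    (hom_ext fun x p => ?_) z
  simp only [LinearMap.comp_apply, koszulD_pure, koszulContract_pure, map_sum, mapCoeff_pure,
    contractBasis_zero_wedgeBasis, apply_ite (pure N g 0 _), map_zero, LinearMap.sum_apply,
    Module.End.mul_apply, Finset.sum_ite_eq', Finset.mem_univ, if_true]

theorem koszulContract_koszulD_add {S T : Fin g → Module.End ℂ N}
    (hST : ∀ i j, Commute (S i) (T j)) {k : ℕ} (z : KCochain N g (k + 1)) :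
    koszulContract g S (k + 1) (koszulD g T (k + 1) z) +
      koszulD g T k (koszulContract g S k z) = mapCoeff (∑ j, S j * T j) g (k + 1) z := by
  refine LinearMap.congr_fun (f := koszulContract g S (k + 1) ∘ₗ koszulD g T (k + 1) +
    koszulD g T k ∘ₗ koszulContract g S k) (hom_ext fun x p => ?_) z
  simp only [LinearMap.add_apply, LinearMap.comp_apply, koszulD_pure, koszulContract_pure, map_sum,
    mapCoeff_pure, LinearMap.sum_apply, Module.End.mul_apply]
  rw [Finset.sum_comm, ← Finset.sum_add_distrib]
  refine Finset.sum_congr rfl fun i _ => ?_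
  have hterm (j : Fin g) :
      pure N g (k + 1) (S i (T j x)) (contractBasis g (k + 1) i (wedgeBasis g (k + 1) j p)) +
        pure N g (k + 1) (T j (S i x)) (wedgeBasis g k j (contractBasis g k i p)) =
      if i = j then pure N g (k + 1) (S i (T j x)) p else 0 := by
    rw [← Module.End.mul_apply (T j), ← (hST i j).eq, Module.End.mul_apply, ← map_add,
      contractBasis_wedgeBasis_add, apply_ite (pure N g (k + 1) _), map_zero]
  rw [← Finset.sum_add_distrib, Finset.sum_congr rfl fun j _ => hterm j, Finset.sum_ite_eq,
    if_pos (Finset.mem_univ i)]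

theorem mapCoeff_sum_mul_mem_range_koszulDInto {S T : Fin g → Module.End ℂ N}
    (hST : ∀ i j, Commute (S i) (T j)) {k : ℕ} {z : KCochain N g k} (hz : koszulD g T k z = 0) :
    mapCoeff (∑ j, S j * T j) g k z ∈ LinearMap.range (koszulDInto g T k) := by
  cases k with
  | zero => rw [← koszulContract_koszulD_zero, hz, map_zero]; exact Submodule.zero_mem _
  | succ k =>
    rw [← koszulContract_koszulD_add hST, hz, map_zero, zero_add]
    exact LinearMap.mem_range_self _ _

/-- Vanishing of the Koszul cohomology in all degrees smaller than `r`. -/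
def KoszulAcyclicBelow (g : ℕ) (T : Fin g → Module.End ℂ N) (r : ℕ) : Prop :=
  ∀ k < r, LinearMap.ker (koszulD g T k) ≤ LinearMap.range (koszulDInto g T k)

/-- The long exact sequence of `0 → N → N → N' → 0`, whose first map `Y` is zero on cohomology,
shifts the vanishing range by one. -/
theorem KoszulAcyclicBelow.succ {T S : Fin g → Module.End ℂ N} {T' : Fin g → Module.End ℂ N'}
    {Y : Module.End ℂ N} {φ : N →ₗ[ℂ] N'} {r : ℕ} (hT' : KoszulAcyclicBelow g T' r)
    (hT : ∀ i j, Commute (T i) (T j)) (hST : ∀ i j, Commute (S i) (T j))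
    (hY : ∑ j, S j * T j = Y) (hφT : ∀ j x, φ (T j x) = T' j (φ x))
    (hinj : Function.Injective Y) (hexact : Function.Exact Y φ) (hφ : Function.Surjective φ) :
    KoszulAcyclicBelow g T (r + 1) := by
  have hYT (j : Fin g) (x : N) : Y (T j x) = T j (Y x) :=
    hY ▸ LinearMap.congr_fun (Commute.sum_left _ _ _ fun i _ => (hST i j).mul_left (hT i j)).eq x
  intro k hk z hz
  rw [LinearMap.mem_ker] at hz
  have hYz := mapCoeff_sum_mul_mem_range_koszulDInto hST hz
  rw [hY] at hYz
  cases k with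
  | zero =>
    obtain ⟨_, hw⟩ := hYz
    have hz0 : mapCoeff Y g 0 z = mapCoeff Y g 0 0 := hw.symm.trans (map_zero _).symm
    rw [mapCoeff_injective hinj 0 hz0]
    exact Submodule.zero_mem _
  | succ k =>
    obtain ⟨w, hw⟩ : mapCoeff Y g (k + 1) z ∈ LinearMap.range (koszulD g T k) := hYz
    have hcocycle : koszulD g T' k (mapCoeff φ g k w) = 0 := by
      rw [koszulD_map hφT, hw, (mapCoeff_exact hexact hφ (k + 1)).apply_apply_eq_zero]
    obtain ⟨u', hu'⟩ := hT' k (Nat.lt_of_succ_lt_succ hk) hcocycle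
    obtain ⟨u, rfl⟩ := mapCoeff_surjective hφ (g := g) _ u'
    rw [koszulDInto_map hφT] at hu'
    obtain ⟨v, hv⟩ := (mapCoeff_exact hexact hφ k (w - koszulDInto g T k u)).mp
      (by rw [map_sub, hu', sub_self])
    refine ⟨v, mapCoeff_injective hinj (k + 1) ?_⟩
    have hdd : koszulD g T k (koszulDInto g T k u) = 0 :=
      range_koszulDInto_le_ker hT k (LinearMap.mem_range_self _ u)
    rw [← hw, koszulDInto, ← koszulD_map hYT, hv, map_sub, hdd, sub_zero]

open RingTheory.Sequence Pointwise in
theorem koszulAcyclicBelow_of_isWeaklyRegular {R : Type*} [CommRing R] [Algebra ℂ R]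
    (a : Fin g → R) {rs : List R} (hrs : ∀ y ∈ rs, y ∈ Ideal.span (Set.range a)) :
    ∀ (N : Type) [AddCommGroup N] [Module ℂ N] [Module R N] [IsScalarTower ℂ R N],
      IsWeaklyRegular N rs →
        KoszulAcyclicBelow g (fun j => Algebra.lsmul ℂ ℂ N (a j)) rs.length := by
  induction rs with
  | nil => exact fun _ _ _ _ _ _ k hk => absurd hk (Nat.not_lt_zero k)
  | cons y ys ih =>
    intro N _ _ _ _ hreg
    obtain ⟨hy, hys⟩ := (isWeaklyRegular_cons_iff N y ys).mp hreg
    obtain ⟨b, hb⟩ := Ideal.mem_span_range_iff_exists_fun.mp (hrs y List.mem_cons_self)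
    have hcomm (c d : R) : Commute (Algebra.lsmul ℂ ℂ N c) (Algebra.lsmul ℂ ℂ N d) :=
      (Commute.all c d).map _
    have hY : ∑ j, Algebra.lsmul ℂ ℂ N (b j) * Algebra.lsmul ℂ ℂ N (a j) =
        Algebra.lsmul ℂ ℂ N y := by
      simp only [← map_mul, ← map_sum, hb]
    let q : N →ₗ[ℂ] QuotSMulTop y N := (y • (⊤ : Submodule R N)).mkQ.restrictScalars ℂ
    have hexact : Function.Exact (Algebra.lsmul ℂ ℂ N y) q := fun x => by
      change (y • (⊤ : Submodule R N)).mkQ x = 0 ↔ _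
      rw [Submodule.mkQ_apply, Submodule.Quotient.mk_eq_zero,
        Submodule.mem_smul_pointwise_iff_exists]
      exact ⟨fun ⟨v, _, hv⟩ => ⟨v, hv⟩, fun ⟨v, hv⟩ => ⟨v, trivial, hv⟩⟩
    exact (ih (fun y' hy' => hrs y' (List.mem_cons_of_mem _ hy')) (QuotSMulTop y N) hys).succ
      (S := fun j => Algebra.lsmul ℂ ℂ N (b j)) (fun i j => hcomm _ _) (fun i j => hcomm _ _) hY
      (fun j => map_smul (y • (⊤ : Submodule R N)).mkQ (a j)) (fun _ _ h => hy h) hexact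
      (y • (⊤ : Submodule R N)).mkQ_surjective

end KoszulComplex

section Finiteness

theorem finite_quotient_comap_of_smul_mem {K R M : Type*} [Field K] [CommRing R] [Algebra K R]
    [AddCommGroup M] [Module K M] [Module R M] [IsScalarTower K R M] (I : Ideal R)
    [Module.Finite K (R ⧸ I)] {Z : Submodule R M} (hZ : Z.FG) {B : Submodule K M}
    (hB : ∀ r ∈ I, ∀ z ∈ Z, r • z ∈ B) :
    Module.Finite K (Z.restrictScalars K ⧸ B.comap (Z.restrictScalars K).subtype) := by
  have : Module.Finite R Z := Module.Finite.iff_fg.mpr hZ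
  have : Module.Finite (R ⧸ I) (Z ⧸ (I • ⊤ : Submodule R Z)) :=
    .of_restrictScalars_finite R _ _
  have : Module.Finite K (Z ⧸ (I • ⊤ : Submodule R Z)) := .trans (R ⧸ I) _
  have hle : (I • ⊤ : Submodule R Z).restrictScalars K ≤
      B.comap (Z.restrictScalars K).subtype := by
    intro z hz
    rw [Submodule.restrictScalars_mem] at hz
    induction hz using Submodule.smul_induction_on' with
    | smul r hr z _ => exact hB r hr z z.2
    | add x _ y _ hx hy => exact Submodule.add_mem _ hx hy
  have : Module.Finite K (Z ⧸ (I • ⊤ : Submodule R Z).restrictScalars K) :=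
    .equiv (Submodule.Quotient.restrictScalarsEquiv K _).symm
  exact Module.Finite.of_surjective _ (Submodule.factor_surjective hle)

instance (g k : ℕ) : Module.Finite ℂ (ExtPow g k) :=
  inferInstanceAs (Module.Finite ℂ (⋀[ℂ]^k (Fin g → ℂ)))

variable {N : Type} [AddCommGroup N] [Module ℂ N] {g : ℕ}
  {R : Type*} [CommRing R] [Algebra ℂ R] [Module R N] [IsScalarTower ℂ R N]

namespace KCochain

instance (k : ℕ) : Module R (KCochain N g k) :=
  inferInstanceAs (Module R (N ⊗[ℂ] ExtPow g k))

instance (k : ℕ) : IsScalarTower ℂ R (KCochain N g k) :=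
  inferInstanceAs (IsScalarTower ℂ R (N ⊗[ℂ] ExtPow g k))

instance (k : ℕ) [Module.Finite R N] : Module.Finite R (KCochain N g k) :=
  Module.Finite.equiv
    (TensorProduct.AlgebraTensorModule.cancelBaseChange ℂ R R N (ExtPow g k))

theorem smul_eq_mapCoeff {k : ℕ} (r : R) (z : KCochain N g k) :
    r • z = mapCoeff (Algebra.lsmul ℂ ℂ N r) g k z := by
  refine LinearMap.congr_fun (f := Algebra.lsmul ℂ ℂ (KCochain N g k) r)
    (KCochain.hom_ext fun x p => ?_) z
  rfl

end KCochain

open KCochain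

/-- The cocycles of the Koszul complex of multiplication operators, as a module. -/
def koszulCocycles (N : Type) [AddCommGroup N] [Module ℂ N] [Module R N] [IsScalarTower ℂ R N]
    (a : Fin g → R) (k : ℕ) : Submodule R (KCochain N g k) where
  __ := LinearMap.ker (koszulD g (fun j => Algebra.lsmul ℂ ℂ N (a j)) k)
  smul_mem' r z hz := by
    change koszulD g _ k (r • z) = 0
    rw [smul_eq_mapCoeff, koszulD_map (T := fun j => Algebra.lsmul ℂ ℂ N (a j)),
      LinearMap.mem_ker.mp hz, map_zero]
    exact fun j x => smul_comm r (a j) x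

theorem smul_mem_range_koszulDInto {a : Fin g → R} {k : ℕ} {r : R}
    (hr : r ∈ Ideal.span (Set.range a)) {z : KCochain N g k} (hz : z ∈ koszulCocycles N a k) :
    r • z ∈ LinearMap.range (koszulDInto g (fun j => Algebra.lsmul ℂ ℂ N (a j)) k) := by
  obtain ⟨b, rfl⟩ := Ideal.mem_span_range_iff_exists_fun.mp hr
  have h := mapCoeff_sum_mul_mem_range_koszulDInto (S := fun j => Algebra.lsmul ℂ ℂ N (b j))
    (T := fun j => Algebra.lsmul ℂ ℂ N (a j)) (fun i j => (Commute.all (b i) (a j)).map _) hz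
  simpa only [← map_mul, ← map_sum, ← smul_eq_mapCoeff] using h

theorem finite_koszulH_lsmul [IsNoetherianRing R] [Module.Finite R N] (a : Fin g → R)
    [Module.Finite ℂ (R ⧸ Ideal.span (Set.range a))] (k : ℕ) :
    Module.Finite ℂ (KoszulH g (fun j => Algebra.lsmul ℂ ℂ N (a j)) k) := by
  have hker : (koszulCocycles N a k).restrictScalars ℂ =
      LinearMap.ker (koszulD g (fun j => Algebra.lsmul ℂ ℂ N (a j)) k) := rfl
  have h := finite_quotient_comap_of_smul_mem (Ideal.span (Set.range a))
    (IsNoetherian.noetherian (koszulCocycles N a k))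
    fun r hr z hz => smul_mem_range_koszulDInto hr hz
  rw [hker] at h
  exact h

end Finiteness

section Gradings

variable {K V W : Type*} [Field K] [AddCommGroup V] [Module K V] [AddCommGroup W] [Module K W]

/-- An `ℕ`-grading of a vector space by finite-dimensional homogeneous components, encoded by the
projections onto the components. -/
structure FiniteGrading (K V : Type*) [Field K] [AddCommGroup V] [Module K V] where
  proj : ℕ → Module.End K V
  proj_proj (i j : ℕ) (x : V) : proj i (proj j x) = if i = j then proj j x else 0
  exists_sum_proj (x : V) : ∃ s : Finset ℕ, ∑ i ∈ s, proj i x = x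
  finite_range (i : ℕ) : Module.Finite K (LinearMap.range (proj i))

theorem range_eq_map_of_surjective {φ : V →ₗ[K] W} (hφ : Function.Surjective φ)
    {P : Module.End K V} {Q : Module.End K W} (h : ∀ x, Q (φ x) = φ (P x)) :
    LinearMap.range Q = (LinearMap.range P).map φ := by
  rw [← LinearMap.range_comp, ← LinearMap.range_comp_of_range_eq_top Q
    (LinearMap.range_eq_top.mpr hφ), LinearMap.ext (f := Q ∘ₗ φ) (g := φ ∘ₗ P) h]

namespace FiniteGrading

variable (G : FiniteGrading K V)

theorem proj_proj_self (i : ℕ) (x : V) : G.proj i (G.proj i x) = G.proj i x := by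
  rw [G.proj_proj, if_pos rfl]

theorem proj_eq_zero_of_notMem {s : Finset ℕ} {x : V} (hs : ∑ i ∈ s, G.proj i x = x) {j : ℕ}
    (hj : j ∉ s) : G.proj j x = 0 := by
  rw [← hs, map_sum]
  exact Finset.sum_eq_zero fun i hi => by rw [G.proj_proj, if_neg (ne_of_mem_of_not_mem hi hj).symm]

theorem sum_proj_of_subset {s t : Finset ℕ} {x : V} (hs : ∑ i ∈ s, G.proj i x = x)
    (hst : s ⊆ t) : ∑ i ∈ t, G.proj i x = x := by
  rw [← Finset.sum_subset hst fun i _ hi => G.proj_eq_zero_of_notMem hs hi, hs]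

theorem exists_sum_proj_of_finite {ι : Type*} [Finite ι] (x : ι → V) :
    ∃ s : Finset ℕ, ∀ a, ∑ i ∈ s, G.proj i (x a) = x a := by
  have := Fintype.ofFinite ι
  choose s hs using fun a => G.exists_sum_proj (x a)
  exact ⟨Finset.univ.biUnion s, fun a =>
    G.sum_proj_of_subset (hs a) (Finset.subset_biUnion_of_mem s (Finset.mem_univ a))⟩

theorem exists_sum_proj_eq_one [Module.Finite K V] : ∃ s : Finset ℕ, ∑ i ∈ s, G.proj i = 1 := by
  obtain ⟨s, hs⟩ := G.exists_sum_proj_of_finite (Module.finBasis K V)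
  exact ⟨s, (Module.finBasis K V).ext fun a => by
    rw [LinearMap.sum_apply, hs, Module.End.one_apply]⟩

/-- A linear map of degree zero. -/
def IsGraded (f : V →ₗ[K] W) (G : FiniteGrading K V) (H : FiniteGrading K W) : Prop :=
  ∀ i x, H.proj i (f x) = f (G.proj i x)

/-- The grading of a graded subspace. -/
def restrict (U : Submodule K V) (hU : ∀ i, ∀ x ∈ U, G.proj i x ∈ U) : FiniteGrading K U where
  proj i := (G.proj i).restrict (hU i)
  proj_proj i j x := by
    refine Subtype.ext ?_
    rw [apply_ite Subtype.val]
    exact G.proj_proj i j x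
  exists_sum_proj x := by
    obtain ⟨s, hs⟩ := G.exists_sum_proj x
    exact ⟨s, Subtype.ext (by rw [AddSubmonoidClass.coe_finsetSum]; exact hs)⟩
  finite_range i := by
    have := G.finite_range i
    have hmaps : ∀ y ∈ LinearMap.range ((G.proj i).restrict (hU i)),
        U.subtype y ∈ LinearMap.range (G.proj i) := by
      rintro _ ⟨x, rfl⟩
      exact ⟨x, rfl⟩
    refine Module.Finite.of_injective (U.subtype.restrict hmaps) fun x y h => ?_
    rw [Subtype.ext_iff] at h
    exact Subtype.ext (Subtype.ext h)

theorem isGraded_subtype (U : Submodule K V) (hU : ∀ i, ∀ x ∈ U, G.proj i x ∈ U) :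
    IsGraded U.subtype (G.restrict U hU) G := fun _ _ => rfl

/-- The projections induced on the target of a surjection with graded kernel. -/
def mapProj (φ : V →ₗ[K] W) (hφ : Function.Surjective φ)
    (hker : ∀ i x, φ x = 0 → φ (G.proj i x) = 0) (i : ℕ) : Module.End K W :=
  (LinearMap.ker φ).liftQ (φ ∘ₗ G.proj i) (hker i) ∘ₗ (φ.quotKerEquivOfSurjective hφ).symm

theorem mapProj_apply (φ : V →ₗ[K] W) (hφ : Function.Surjective φ)
    (hker : ∀ i x, φ x = 0 → φ (G.proj i x) = 0) (i : ℕ) (x : V) :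
    G.mapProj φ hφ hker i (φ x) = φ (G.proj i x) := by
  have hsymm : (φ.quotKerEquivOfSurjective hφ).symm (φ x) = (LinearMap.ker φ).mkQ x :=
    (LinearEquiv.symm_apply_eq _).mpr rfl
  rw [mapProj, LinearMap.comp_apply, LinearEquiv.coe_coe, hsymm]
  rfl

/-- The grading induced on the target of a surjection with graded kernel. -/
def map (φ : V →ₗ[K] W) (hφ : Function.Surjective φ)
    (hker : ∀ i x, φ x = 0 → φ (G.proj i x) = 0) : FiniteGrading K W where
  proj := G.mapProj φ hφ hker
  proj_proj i j y := by
    obtain ⟨x, rfl⟩ := hφ y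
    rw [mapProj_apply, mapProj_apply, G.proj_proj, apply_ite φ, map_zero]
  exists_sum_proj y := by
    obtain ⟨x, rfl⟩ := hφ y
    obtain ⟨s, hs⟩ := G.exists_sum_proj x
    exact ⟨s, by simp only [mapProj_apply, ← map_sum, hs]⟩
  finite_range i := by
    have := G.finite_range i
    rw [range_eq_map_of_surjective hφ (G.mapProj_apply φ hφ hker i)]
    infer_instance

theorem isGraded_map (φ : V →ₗ[K] W) (hφ : Function.Surjective φ)
    (hker : ∀ i x, φ x = 0 → φ (G.proj i x) = 0) : IsGraded φ G (G.map φ hφ hker) :=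
  G.mapProj_apply φ hφ hker

/-- The grading with all degrees raised by `n`. -/
def shift (n : ℕ) : FiniteGrading K V where
  proj i := if n ≤ i then G.proj (i - n) else 0
  proj_proj i j x := by
    by_cases hi : n ≤ i <;> by_cases hj : n ≤ j
    · simp only [if_pos hi, if_pos hj, G.proj_proj, show i - n = j - n ↔ i = j by omega]
    · simp [hj]
    · rw [if_neg hi, if_neg (show i ≠ j by omega), LinearMap.zero_apply]
    · simp [hj]
  exists_sum_proj x := by
    obtain ⟨s, hs⟩ := G.exists_sum_proj x
    refine ⟨s.map (addRightEmbedding n), ?_⟩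
    simpa only [Finset.sum_map, addRightEmbedding_apply, Nat.le_add_left, if_true,
      Nat.add_sub_cancel] using hs
  finite_range i := by
    by_cases hi : n ≤ i
    · rw [if_pos hi]
      exact G.finite_range (i - n)
    · rw [if_neg hi, LinearMap.range_zero]
      infer_instance

theorem shift_proj (n i : ℕ) : (G.shift n).proj i = if n ≤ i then G.proj (i - n) else 0 := rfl

theorem shift_shift_proj (m n i : ℕ) :
    ((G.shift m).shift n).proj i = (G.shift (m + n)).proj i := by
  simp only [shift_proj]
  split_ifs <;> first | rfl | omega | rw [Nat.sub_sub, Nat.add_comm m n]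

theorem IsGraded.shift {f : V →ₗ[K] W} {G : FiniteGrading K V} {H : FiniteGrading K W}
    (hf : IsGraded f G H) (n : ℕ) : IsGraded f (G.shift n) (H.shift n) := fun i x => by
  rw [shift_proj, shift_proj]
  split_ifs
  · exact hf _ x
  · exact (map_zero f).symm

section Pi

variable {ι : Type*} {U : ι → Type*} [∀ a, AddCommGroup (U a)] [∀ a, Module K (U a)]

theorem range_piMap (f : ∀ a, Module.End K (U a)) :
    LinearMap.range (LinearMap.piMap f) =
      LinearMap.range (LinearMap.piMap fun a => (LinearMap.range (f a)).subtype) := by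
  ext y
  constructor
  · rintro ⟨x, rfl⟩
    exact ⟨fun a => ⟨f a (x a), x a, rfl⟩, rfl⟩
  · rintro ⟨z, rfl⟩
    choose x hx using fun a => (z a).2
    exact ⟨x, funext hx⟩

/-- The grading of a finite product. -/
def pi [Finite ι] (G : ∀ a, FiniteGrading K (U a)) : FiniteGrading K (∀ a, U a) where
  proj i := LinearMap.piMap fun a => (G a).proj i
  proj_proj i j x := by
    ext a
    rw [ite_apply]
    exact (G a).proj_proj i j (x a)
  exists_sum_proj x := by
    have := Fintype.ofFinite ι
    choose s hs using fun a => (G a).exists_sum_proj (x a)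
    refine ⟨Finset.univ.biUnion s, funext fun a => ?_⟩
    rw [Finset.sum_apply]
    exact (G a).sum_proj_of_subset (hs a) (Finset.subset_biUnion_of_mem s (Finset.mem_univ a))
  finite_range i := by
    have (a : ι) := (G a).finite_range i
    rw [range_piMap]
    infer_instance

end Pi

/-- The dimension of the `i`-th homogeneous component. -/
def hilbertFunction (i : ℕ) : ℕ := Module.finrank K (LinearMap.range (G.proj i))

theorem hilbertFunction_congr {G H : FiniteGrading K V} {i j : ℕ} (h : G.proj i = H.proj j) :
    G.hilbertFunction i = H.hilbertFunction j := by
  rw [hilbertFunction, h, hilbertFunction]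

theorem hilbertFunction_eq_zero {i : ℕ} (h : G.proj i = 0) : G.hilbertFunction i = 0 := by
  rw [hilbertFunction, h, LinearMap.range_zero, finrank_bot]

/-- The generating function of the dimensions of the homogeneous components. -/
def hilbertSeries : PowerSeries ℚ := .mk fun i => (G.hilbertFunction i : ℚ)

theorem hilbertSeries_eq_add_of_exact {U : Type*} [AddCommGroup U] [Module K U]
    {F : FiniteGrading K U} {G : FiniteGrading K V} {H : FiniteGrading K W} {f : U →ₗ[K] V}
    {g : V →ₗ[K] W} (hfG : IsGraded f F G) (hgG : IsGraded g G H) (hf : Function.Injective f)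
    (hg : Function.Surjective g) (hfg : Function.Exact f g) :
    G.hilbertSeries = F.hilbertSeries + H.hilbertSeries := by
  refine PowerSeries.ext fun i => ?_
  have := G.finite_range i
  have hker : (LinearMap.ker (g.domRestrict (LinearMap.range (G.proj i)))).map
      (LinearMap.range (G.proj i)).subtype = (LinearMap.range (F.proj i)).map f := by
    ext y
    constructor
    · rintro ⟨⟨_, x, rfl⟩, hx, rfl⟩
      obtain ⟨u, hu⟩ := (hfg _).mp hx
      exact ⟨F.proj i u, ⟨u, rfl⟩,
        (hfG i u).symm.trans ((congrArg _ hu).trans (G.proj_proj_self i x))⟩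
    · rintro ⟨_, ⟨u, rfl⟩, rfl⟩
      exact ⟨⟨f (F.proj i u), f u, hfG i u⟩, hfg.apply_apply_eq_zero _, rfl⟩
  have hrank := (g.domRestrict (LinearMap.range (G.proj i))).finrank_range_add_finrank_ker
  rw [LinearMap.range_domRestrict, ← range_eq_map_of_surjective hg (hgG i),
    ← Submodule.finrank_map_subtype_eq, hker,
    ← (Submodule.equivMapOfInjective f hf _).finrank_eq]
    at hrank
  simp only [hilbertSeries, PowerSeries.coeff_mk, map_add, hilbertFunction]
  rw [← hrank]
  push_cast
  ring

theorem hilbertSeries_eq_of_equiv {G : FiniteGrading K V} {H : FiniteGrading K W} (φ : V ≃ₗ[K] W)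
    (hφ : IsGraded φ.toLinearMap G H) : G.hilbertSeries = H.hilbertSeries := by
  refine PowerSeries.ext fun i => ?_
  simp only [hilbertSeries, PowerSeries.coeff_mk, hilbertFunction]
  rw [range_eq_map_of_surjective φ.surjective (hφ i), LinearEquiv.finrank_map_eq]

theorem hilbertSeries_shift (n : ℕ) :
    (G.shift n).hilbertSeries = PowerSeries.X ^ n * G.hilbertSeries := by
  refine PowerSeries.ext fun i => ?_
  rw [PowerSeries.coeff_X_pow_mul']
  simp only [hilbertSeries, PowerSeries.coeff_mk]
  split_ifs with hi
  · rw [hilbertFunction_congr (if_pos hi : (G.shift n).proj i = G.proj (i - n))]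
  · rw [hilbertFunction_eq_zero (G.shift n) (if_neg hi), Nat.cast_zero]

theorem hilbertSeries_pi {ι : Type*} [Fintype ι] {U : ι → Type*} [∀ a, AddCommGroup (U a)]
    [∀ a, Module K (U a)] (G : ∀ a, FiniteGrading K (U a)) :
    (pi G).hilbertSeries = ∑ a, (G a).hilbertSeries := by
  refine PowerSeries.ext fun i => ?_
  have (a : ι) := (G a).finite_range i
  simp only [hilbertSeries, PowerSeries.coeff_mk, hilbertFunction, map_sum]
  rw [← Nat.cast_sum, ← Module.finrank_pi_fintype]
  congr 1
  change Module.finrank K (LinearMap.range (LinearMap.piMap fun a => (G a).proj i)) = _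
  rw [range_piMap]
  exact LinearMap.finrank_range_of_inj fun x y h =>
    funext fun a => Subtype.ext (congrFun h a)

theorem hilbertSeries_of_subsingleton [Subsingleton V] : G.hilbertSeries = 0 := by
  refine PowerSeries.ext fun i => ?_
  simp only [hilbertSeries, PowerSeries.coeff_mk, hilbertFunction, map_zero]
  rw [Module.finrank_zero_of_subsingleton, Nat.cast_zero]

theorem sum_hilbertFunction {s : Finset ℕ} (hs : ∑ i ∈ s, G.proj i = 1) :
    ∑ i ∈ s, G.hilbertFunction i = Module.finrank K V := by
  have (i : ℕ) := G.finite_range i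
  let φ : V →ₗ[K] ∀ i : s, LinearMap.range (G.proj i) :=
    LinearMap.pi fun i => (G.proj i).rangeRestrict
  have hs' (x : V) : ∑ i ∈ s, G.proj i x = x := by
    rw [← LinearMap.sum_apply, hs, Module.End.one_apply]
  have hinj : Function.Injective φ := fun x y hxy => by
    rw [← hs' x, ← hs' y]
    exact Finset.sum_congr rfl fun i hi => congrArg Subtype.val (congrFun hxy ⟨i, hi⟩)
  have hsurj : Function.Surjective φ := fun y => by
    refine ⟨∑ i, (y i : V), funext fun j => Subtype.ext ?_⟩
    change G.proj j (∑ i, (y i : V)) = y j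
    choose x hx using fun i => (y i).2
    simp only [← hx, map_sum, G.proj_proj, ← Subtype.ext_iff]
    rw [Finset.sum_ite_eq, if_pos (Finset.mem_univ j)]
  rw [(LinearEquiv.ofBijective φ ⟨hinj, hsurj⟩).finrank_eq, Module.finrank_pi_fintype,
    ← Finset.sum_coe_sort]
  rfl

theorem exists_polynomial_hilbertSeries [Module.Finite K V] :
    ∃ p : Polynomial ℚ, G.hilbertSeries = p ∧ p.eval 1 = Module.finrank K V := by
  obtain ⟨s, hs⟩ := G.exists_sum_proj_eq_one
  refine ⟨∑ i ∈ s, Polynomial.monomial i (G.hilbertFunction i : ℚ), ?_, ?_⟩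
  · refine PowerSeries.ext fun i => ?_
    simp only [hilbertSeries, PowerSeries.coeff_mk, Polynomial.coeff_coe,
      Polynomial.finsetSum_coeff, Polynomial.coeff_monomial, Finset.sum_ite_eq']
    split_ifs with hi
    · rfl
    · rw [G.hilbertFunction_eq_zero, Nat.cast_zero]
      exact LinearMap.ext fun x =>
        G.proj_eq_zero_of_notMem (by rw [← LinearMap.sum_apply, hs, Module.End.one_apply]) hi
  · simp only [Polynomial.eval_finsetSum, Polynomial.eval_monomial, one_pow, mul_one]
    rw [← Nat.cast_sum, G.sum_hilbertFunction hs]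

end FiniteGrading

end Gradings

section CochainGrading

variable {N : Type} [AddCommGroup N] [Module ℂ N] {g : ℕ}

/-- The basis `dz_I = dz_{i_1} ∧ ⋯ ∧ dz_{i_k}` of `Λ^k ℂ^g`, indexed by the `k`-element subsets
`I = {i_1 < ⋯ < i_k}`. -/
def extPowBasis (g k : ℕ) : Module.Basis (Set.powersetCard (Fin g) k) ℂ (ExtPow g k) :=
  (Pi.basisFun ℂ (Fin g)).exteriorPower k

theorem sum_powersetCard_eq_sum_ofFinEmbEquiv_symm {k : ℕ} {A : Type*} [AddCommMonoid A]
    (e : Fin g → A) (I : Set.powersetCard (Fin g) k) :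
    ∑ j ∈ I.val, e j = ∑ l, e (Set.powersetCard.ofFinEmbEquiv.symm I l) := by
  have hI : I.val = Finset.univ.map (Set.powersetCard.ofFinEmbEquiv.symm I).toEmbedding := by
    ext i
    refine (Set.powersetCard.mem_range_ofFinEmbEquiv_symm_iff_mem I i).symm.trans ?_
    simp
  rw [hI, Finset.sum_map]
  rfl

theorem wedgeBasis_extPowBasis {k : ℕ} (j : Fin g) (I : Set.powersetCard (Fin g) k) :
    wedgeBasis g k j (extPowBasis g k I) =
      exteriorPower.ιMulti ℂ (k + 1) (Pi.basisFun ℂ (Fin g) ∘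
        (Fin.cons j (Set.powersetCard.ofFinEmbEquiv.symm I) : Fin (k + 1) → Fin g)) := by
  refine Subtype.ext ?_
  have hI : extPowBasis g k I = exteriorPower.ιMulti_family ℂ k (Pi.basisFun ℂ (Fin g)) I :=
    exteriorPower.basis_apply ..
  rw [exteriorPower.ιMulti_apply_coe, ExteriorAlgebra.ιMulti_succ_apply, hI, Function.comp_apply,
    Fin.cons_zero, Pi.basisFun_apply]
  rfl

/-- The nonzero coordinates of `dz_j ∧ dz_I` are indexed by `I ∪ {j}`. -/
theorem sum_add_of_repr_wedgeBasis_ne_zero {k : ℕ} (e : Fin g → ℕ) {j : Fin g}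
    {I : Set.powersetCard (Fin g) k} {J : Set.powersetCard (Fin g) (k + 1)}
    (h : (extPowBasis g (k + 1)).repr (wedgeBasis g k j (extPowBasis g k I)) J ≠ 0) :
    ∑ i ∈ I.val, e i + e j = ∑ i ∈ J.val, e i := by
  set v : Fin (k + 1) → Fin g := Fin.cons j (Set.powersetCard.ofFinEmbEquiv.symm I) with hv
  rw [wedgeBasis_extPowBasis, ← hv] at h
  change ((Pi.basisFun ℂ (Fin g)).exteriorPower (k + 1)).repr _ J ≠ 0 at h
  rw [exteriorPower.basis_repr_apply, exteriorPower.ιMultiDual_apply_ιMulti,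
    Matrix.det_apply] at h
  obtain ⟨σ, -, hσ⟩ := Finset.exists_ne_zero_of_sum_ne_zero h
  have hvσ (i : Fin (k + 1)) : v (σ i) = Set.powersetCard.ofFinEmbEquiv.symm J i := by
    by_contra hne
    refine hσ ?_
    rw [Finset.prod_eq_zero (Finset.mem_univ i), smul_zero]
    simp [Matrix.of_apply, Pi.single_apply, Ne.symm hne]
  simp only [sum_powersetCard_eq_sum_ofFinEmbEquiv_symm, ← hvσ]
  rw [Equiv.sum_comp σ fun l => e (v l), Fin.sum_univ_succ]
  simp only [hv, Fin.cons_zero, Fin.cons_succ, add_comm]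

/-- The weight `∑_{j ∉ I} e_j`, the degree carried by `dz_I` in the Koszul complex. -/
def codegree {k : ℕ} (e : Fin g → ℕ) (I : Set.powersetCard (Fin g) k) : ℕ := ∑ j ∈ I.valᶜ, e j

theorem add_codegree_of_repr_wedgeBasis_ne_zero {k : ℕ} (e : Fin g → ℕ) {j : Fin g}
    {I : Set.powersetCard (Fin g) k} {J : Set.powersetCard (Fin g) (k + 1)}
    (h : (extPowBasis g (k + 1)).repr (wedgeBasis g k j (extPowBasis g k I)) J ≠ 0) :
    e j + codegree e J = codegree e I := by
  have hIJ := sum_add_of_repr_wedgeBasis_ne_zero e h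
  have hI := Finset.sum_add_sum_compl I.val e
  have hJ := Finset.sum_add_sum_compl J.val e
  simp only [codegree]
  omega

theorem sum_neg_one_pow_mul_sum_pow_codegree {A : Type*} [CommRing A] (t : A) (e : Fin g → ℕ) :
    ∑ k ∈ Finset.range (g + 1), (-1) ^ k * ∑ I : Set.powersetCard (Fin g) k, t ^ codegree e I =
      ∏ j, (t ^ e j - 1) := by
  simp only [sub_eq_neg_add, Finset.prod_add, Finset.sum_powerset, Finset.card_univ,
    Fintype.card_fin]
  refine Finset.sum_congr rfl fun k _ => ?_
  rw [Finset.mul_sum, Finset.sum_subtype _ (p := (· ∈ Set.powersetCard (Fin g) k))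
    fun I => by simp [Set.powersetCard]]
  refine Finset.sum_congr rfl fun I _ => ?_
  rw [Finset.prod_const, Finset.prod_pow_eq_pow_sum, ← Finset.compl_eq_univ_sdiff,
    Set.powersetCard.card_eq, codegree]

namespace KCochain

theorem hom_ext_basis {k : ℕ} {P : Type*} [AddCommGroup P] [Module ℂ P]
    {φ ψ : KCochain N g k →ₗ[ℂ] P}
    (h : ∀ x I, φ (pure N g k x (extPowBasis g k I)) = ψ (pure N g k x (extPowBasis g k I))) :
    φ = ψ :=
  hom_ext fun x => LinearMap.congr_fun <| (extPowBasis g k).ext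
    (f₁ := φ ∘ₗ pure N g k x) (f₂ := ψ ∘ₗ pure N g k x) (h x)

/-- The cochain `∑_I x_I ⊗ dz_I` with coefficients `x_I`. -/
def ofCoeffs (N : Type) [AddCommGroup N] [Module ℂ N] (g k : ℕ) :
    (Set.powersetCard (Fin g) k → N) ≃ₗ[ℂ] KCochain N g k :=
  (Finsupp.linearEquivFunOnFinite ℂ N _).symm ≪≫ₗ
    (TensorProduct.equivFinsuppOfBasisRight (extPowBasis g k)).symm

theorem ofCoeffs_single {k : ℕ} (I : Set.powersetCard (Fin g) k) (x : N) :
    ofCoeffs N g k (Pi.single I x) = pure N g k x (extPowBasis g k I) := by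
  change (TensorProduct.equivFinsuppOfBasisRight (extPowBasis g k)).symm
    ((Finsupp.linearEquivFunOnFinite ℂ N _).symm (Pi.single I x)) = x ⊗ₜ[ℂ] extPowBasis g k I
  rw [LinearEquiv.symm_apply_eq, Finsupp.linearEquivFunOnFinite_symm_single]
  simp

/-- The grading of the `k`-cochains with coefficients in a graded space for which `x ⊗ dz_I` has
degree `deg x + ∑_{j ∉ I} e_j`, so that operators of degrees `e_j` make the Koszul differential
have degree zero. -/
def grading (G : FiniteGrading ℂ N) (e : Fin g → ℕ) (k : ℕ) : FiniteGrading ℂ (KCochain N g k) :=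
  (FiniteGrading.pi fun I => G.shift (codegree e I)).map (ofCoeffs N g k).toLinearMap
    (ofCoeffs N g k).surjective fun i x hx => by
      rw [(ofCoeffs N g k).injective (hx.trans (map_zero _).symm), map_zero, map_zero]

theorem grading_proj_pure (G : FiniteGrading ℂ N) (e : Fin g → ℕ) {k : ℕ} (i : ℕ)
    (I : Set.powersetCard (Fin g) k) (x : N) :
    (grading G e k).proj i (pure N g k x (extPowBasis g k I)) =
      pure N g k ((G.shift (codegree e I)).proj i x) (extPowBasis g k I) := by
  rw [← ofCoeffs_single, ← ofCoeffs_single, grading]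
  refine (FiniteGrading.isGraded_map _ _ _ _ i _).trans (congrArg _ (funext fun J => ?_))
  exact Pi.apply_single (fun J => (G.shift (codegree e J)).proj i) (fun _ => map_zero _) I x J

theorem hilbertSeries_grading (G : FiniteGrading ℂ N) (e : Fin g → ℕ) (k : ℕ) :
    (grading G e k).hilbertSeries =
      (∑ I : Set.powersetCard (Fin g) k, PowerSeries.X ^ codegree e I) * G.hilbertSeries := by
  rw [grading, ← FiniteGrading.hilbertSeries_eq_of_equiv (ofCoeffs N g k)
    (FiniteGrading.isGraded_map _ _ _ _), FiniteGrading.hilbertSeries_pi, Finset.sum_mul]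
  simp only [FiniteGrading.hilbertSeries_shift]

end KCochain

open KCochain

theorem isGraded_koszulD {G : FiniteGrading ℂ N} {e : Fin g → ℕ} {T : Fin g → Module.End ℂ N}
    (hT : ∀ j, FiniteGrading.IsGraded (T j) (G.shift (e j)) G) (k : ℕ) :
    FiniteGrading.IsGraded (koszulD g T k) (grading G e k) (grading G e (k + 1)) := fun i =>
  LinearMap.congr_fun <| hom_ext_basis (φ := (grading G e (k + 1)).proj i ∘ₗ koszulD g T k)
    (ψ := koszulD g T k ∘ₗ (grading G e k).proj i) fun x I => by
  simp only [LinearMap.comp_apply, koszulD_pure, grading_proj_pure, map_sum]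
  refine Finset.sum_congr rfl fun j _ => ?_
  rw [← (extPowBasis g (k + 1)).sum_repr (wedgeBasis g k j (extPowBasis g k I))]
  simp only [map_sum, map_smul, grading_proj_pure]
  refine Finset.sum_congr rfl fun J _ => ?_
  by_cases hJ : (extPowBasis g (k + 1)).repr (wedgeBasis g k j (extPowBasis g k I)) J = 0
  · rw [hJ, zero_smul, zero_smul]
  · rw [← add_codegree_of_repr_wedgeBasis_ne_zero e hJ, ← FiniteGrading.shift_shift_proj,
      (hT j).shift]

theorem isGraded_koszulDInto {G : FiniteGrading ℂ N} {e : Fin g → ℕ} {T : Fin g → Module.End ℂ N}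
    (hT : ∀ j, FiniteGrading.IsGraded (T j) (G.shift (e j)) G) (k : ℕ) :
    FiniteGrading.IsGraded (koszulDInto g T k) (grading G e (k - 1)) (grading G e k) := by
  cases k with
  | zero => exact fun i _ => map_zero _
  | succ k => exact isGraded_koszulD hT k

end CochainGrading

section GradedNakayama

open FiniteGrading

theorem FiniteGrading.proj_mem_iSup_range {K N ι : Type*} [Field K] [AddCommGroup N] [Module K N]
    {G : FiniteGrading K N} {T : ι → Module.End K N} {e : ι → ℕ}
    (hT : ∀ j, IsGraded (T j) (G.shift (e j)) G) (i : ℕ) {x : N}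
    (hx : x ∈ ⨆ j, LinearMap.range (T j)) : G.proj i x ∈ ⨆ j, LinearMap.range (T j) := by
  induction hx using Submodule.iSup_induction' with
  | mem j x hx =>
    obtain ⟨u, rfl⟩ := hx
    rw [hT j]
    exact Submodule.mem_iSup_of_mem j (LinearMap.mem_range_self _ _)
  | zero => rw [map_zero]; exact Submodule.zero_mem _
  | add x y _ _ hx hy => rw [map_add]; exact Submodule.add_mem _ hx hy

section

variable {K N R ι : Type*} [Field K] [AddCommGroup N] [Module K N] [CommRing R] [Algebra K R]
  [Module R N] [IsScalarTower K R N]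

theorem fg_span_of_module_finite (p : Submodule K N) [Module.Finite K p] :
    (Submodule.span R (p : Set N)).FG := by
  obtain ⟨t, rfl⟩ := Module.Finite.iff_fg.mp ‹Module.Finite K p›
  exact ⟨t, (Submodule.span_span_of_tower K R (t : Set N)).symm⟩

/-- Graded Nakayama lemma: `N` is generated by its components in the finitely many degrees in which
`N ⧸ ∑_j a_j N` does not vanish. -/
theorem module_finite_of_finite_quotient_iSup_range (G : FiniteGrading K N) {a : ι → R} {e : ι → ℕ}
    (he : ∀ j, 0 < e j) (ha : ∀ j, IsGraded (Algebra.lsmul K K N (a j)) (G.shift (e j)) G)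
    [Module.Finite K (N ⧸ ⨆ j, LinearMap.range (Algebra.lsmul K K N (a j)))] :
    Module.Finite R N := by
  set W := ⨆ j, LinearMap.range (Algebra.lsmul K K N (a j))
  have hker (i : ℕ) (x : N) (hx : W.mkQ x = 0) : W.mkQ (G.proj i x) = 0 :=
    (Submodule.Quotient.mk_eq_zero W).mpr
      (proj_mem_iSup_range ha i ((Submodule.Quotient.mk_eq_zero W).mp hx))
  obtain ⟨s, hs⟩ := (G.map W.mkQ W.mkQ_surjective hker).exists_sum_proj_eq_one
  have hproj : ∀ i ∉ s, ∀ x, G.proj i x ∈ W := fun i hi x => by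
    rw [← Submodule.Quotient.mk_eq_zero W]
    refine (G.isGraded_map W.mkQ W.mkQ_surjective hker i x).symm.trans ?_
    exact proj_eq_zero_of_notMem _ (by rw [← LinearMap.sum_apply, hs, Module.End.one_apply]) hi
  set U : Submodule R N := ⨆ i ∈ s, Submodule.span R (LinearMap.range (G.proj i) : Set N)
  have hUfg : U.FG := Submodule.fg_biSup s _ fun i _ =>
    have := G.finite_range i
    fg_span_of_module_finite _
  have hmem (i : ℕ) : ∀ x, G.proj i x ∈ U := by
    induction i using Nat.strong_induction_on with
    | _ i ih =>
      by_cases hi : i ∈ s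
      · exact fun x => Submodule.mem_iSup_of_mem i
          (Submodule.mem_iSup_of_mem hi (Submodule.subset_span ⟨x, rfl⟩))
      have hWU : W ≤ (U.restrictScalars K).comap (G.proj i) := iSup_le fun j => by
        rintro _ ⟨u, rfl⟩
        rw [Submodule.mem_comap, ha j, shift_proj]
        split_ifs with hij
        · exact U.smul_mem (a j) (ih _ (Nat.sub_lt ((he j).trans_le hij) (he j)) u)
        · exact (map_zero (Algebra.lsmul K K N (a j))).symm ▸ U.zero_mem
      exact fun x => G.proj_proj_self i x ▸ hWU (hproj i hi x)
  refine ⟨(Submodule.eq_top_iff'.mpr fun x => ?_ : U = ⊤) ▸ hUfg⟩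
  obtain ⟨t, ht⟩ := G.exists_sum_proj x
  exact ht ▸ U.sum_mem fun i _ => hmem i x

end

open scoped IsMulCommutative in
theorem exists_algHom_mvPolynomial_end {K N ι : Type*} [Field K] [AddCommGroup N] [Module K N]
    {T : ι → Module.End K N} (hT : ∀ i j, Commute (T i) (T j)) :
    ∃ φ : MvPolynomial ι K →ₐ[K] Module.End K N, ∀ j, φ (X j) = T j := by
  have : IsMulCommutative (Algebra.adjoin K (Set.range T)) :=
    Algebra.isMulCommutative_adjoin K (by rintro _ ⟨i, rfl⟩ _ ⟨j, rfl⟩; exact hT i j)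
  exact ⟨(Algebra.adjoin K (Set.range T)).val.comp
    (aeval fun j => ⟨T j, Algebra.subset_adjoin ⟨j, rfl⟩⟩), fun j => by simp⟩

theorem ker_aeval_zero_eq_span_range_X {R ι : Type*} [CommRing R] :
    RingHom.ker (aeval (0 : ι → R) : MvPolynomial ι R →ₐ[R] R) = Ideal.span (Set.range X) := by
  ext p
  refine Iff.trans ?_ ((pow_one (idealOfVars ι R) ▸ mem_pow_idealOfVars_iff' 1 p).symm)
  simp [RingHom.mem_ker, constantCoeff_eq, Finsupp.degree_eq_zero_iff]

/-- Evaluation at the origin, as an isomorphism. -/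
def quotientSpanRangeXEquiv (R ι : Type*) [CommRing R] :
    (MvPolynomial ι R ⧸ Ideal.span (Set.range (X : ι → MvPolynomial ι R))) ≃ₐ[R] R :=
  (Ideal.quotientEquivAlgOfEq R ker_aeval_zero_eq_span_range_X.symm).trans
    (Ideal.quotientKerAlgEquivOfSurjective fun r => ⟨C r, aeval_C 0 r⟩)

instance (R ι : Type*) [CommRing R] :
    Module.Finite R (MvPolynomial ι R ⧸ Ideal.span (Set.range (X : ι → MvPolynomial ι R))) :=
  .equiv (quotientSpanRangeXEquiv R ι).symm.toLinearEquiv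

theorem finite_koszulH {N : Type} [AddCommGroup N] [Module ℂ N] {g : ℕ} (G : FiniteGrading ℂ N)
    {T : Fin g → Module.End ℂ N} (hcomm : ∀ i j, Commute (T i) (T j)) {e : Fin g → ℕ}
    (he : ∀ j, 0 < e j) (hT : ∀ j, IsGraded (T j) (G.shift (e j)) G)
    [hfin : Module.Finite ℂ (N ⧸ ⨆ j, LinearMap.range (T j))] (k : ℕ) :
    Module.Finite ℂ (KoszulH g T k) := by
  obtain ⟨φ, hφ⟩ := exists_algHom_mvPolynomial_end hcomm
  let : Module (MvPolynomial (Fin g) ℂ) N := Module.compHom N φ.toRingHom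
  have : IsScalarTower ℂ (MvPolynomial (Fin g) ℂ) N := ⟨fun c p x => by
    change φ (c • p) x = c • φ p x
    rw [map_smul, LinearMap.smul_apply]⟩
  obtain rfl : (fun j => Algebra.lsmul ℂ ℂ N (X j : MvPolynomial (Fin g) ℂ)) = T :=
    funext fun j => LinearMap.ext fun x => LinearMap.congr_fun (hφ j) x
  have := module_finite_of_finite_quotient_iSup_range G he hT
  exact finite_koszulH_lsmul _ k

end GradedNakayama

section EulerCharacteristic

open KCochain FiniteGrading

section

variable {K V W : Type*} [Field K] [AddCommGroup V] [Module K V] [AddCommGroup W] [Module K W]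
  {G : FiniteGrading K V} {H : FiniteGrading K W} {f : V →ₗ[K] W}

theorem FiniteGrading.IsGraded.proj_mem_ker (hf : IsGraded f G H) (i : ℕ) :
    ∀ x ∈ LinearMap.ker f, G.proj i x ∈ LinearMap.ker f := fun x hx => by
  rw [LinearMap.mem_ker, ← hf, LinearMap.mem_ker.mp hx, map_zero]

theorem FiniteGrading.IsGraded.proj_mem_range (hf : IsGraded f G H) (i : ℕ) :
    ∀ y ∈ LinearMap.range f, H.proj i y ∈ LinearMap.range f := by
  rintro _ ⟨x, rfl⟩
  exact ⟨G.proj i x, (hf i x).symm⟩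

theorem FiniteGrading.IsGraded.hilbertSeries_eq_ker_add_range (hf : IsGraded f G H) :
    G.hilbertSeries = (G.restrict (LinearMap.ker f) hf.proj_mem_ker).hilbertSeries +
      (H.restrict (LinearMap.range f) hf.proj_mem_range).hilbertSeries :=
  hilbertSeries_eq_add_of_exact (f := (LinearMap.ker f).subtype) (g := f.rangeRestrict)
    (isGraded_subtype _ _ _) (fun i x => Subtype.ext (hf i x)) (Submodule.subtype_injective _)
    f.surjective_rangeRestrict (LinearMap.exact_iff.mpr (by simp))

theorem FiniteGrading.hilbertSeries_eq_of_ker_eq {W' : Type*} [AddCommGroup W'] [Module K W']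
    {H' : FiniteGrading K W'} {f' : V →ₗ[K] W'} (hf : IsGraded f G H) (hf' : IsGraded f' G H')
    (hsurj : Function.Surjective f) (hsurj' : Function.Surjective f')
    (hker : LinearMap.ker f = LinearMap.ker f') : H.hilbertSeries = H'.hilbertSeries := by
  have h := hilbertSeries_eq_add_of_exact (isGraded_subtype G _ hf.proj_mem_ker) hf
    (Submodule.subtype_injective _) hsurj (LinearMap.exact_subtype_ker_map f)
  have h' := hilbertSeries_eq_add_of_exact (isGraded_subtype G _ hf.proj_mem_ker) hf'
    (Submodule.subtype_injective _) hsurj' (hker ▸ LinearMap.exact_subtype_ker_map f')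
  exact add_left_cancel (h.symm.trans h')

end

variable {N : Type} [AddCommGroup N] [Module ℂ N] {g : ℕ}

/-- The cohomology class of a cocycle. -/
def koszulClass (g : ℕ) (T : Fin g → Module.End ℂ N) (k : ℕ) :
    LinearMap.ker (koszulD g T k) →ₗ[ℂ] KoszulH g T k :=
  Submodule.mkQ _

theorem koszulClass_surjective (T : Fin g → Module.End ℂ N) (k : ℕ) :
    Function.Surjective (koszulClass g T k) :=
  Submodule.mkQ_surjective _

theorem koszulClass_eq_zero_iff {T : Fin g → Module.End ℂ N} {k : ℕ}
    {z : LinearMap.ker (koszulD g T k)} :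
    koszulClass g T k z = 0 ↔ z.1 ∈ LinearMap.range (koszulDInto g T k) :=
  Submodule.Quotient.mk_eq_zero _

theorem KoszulAcyclicBelow.subsingleton_koszulH {T : Fin g → Module.End ℂ N} {r k : ℕ}
    (hT : KoszulAcyclicBelow g T r) (hk : k < r) : Subsingleton (KoszulH g T k) :=
  subsingleton_of_forall_eq 0 fun y => by
    obtain ⟨z, rfl⟩ := koszulClass_surjective T k y
    exact koszulClass_eq_zero_iff.mpr (hT k hk z.2)

section TopDegree

instance : IsEmpty (Set.powersetCard (Fin g) (g + 1)) :=
  ⟨fun I => by simpa [Set.powersetCard.card_eq I] using Finset.card_le_univ I.val⟩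

instance : Subsingleton (ExtPow g (g + 1)) :=
  (extPowBasis g (g + 1)).repr.toEquiv.subsingleton

instance : Subsingleton (KCochain N g (g + 1)) :=
  (ofCoeffs N g (g + 1)).symm.toEquiv.subsingleton

/-- The index of the top exterior power `dz_1 ∧ ⋯ ∧ dz_g`. -/
def topIndex (g : ℕ) : Set.powersetCard (Fin g) g := ⟨Finset.univ, Finset.card_fin g⟩

theorem eq_topIndex (I : Set.powersetCard (Fin g) g) : I = topIndex g :=
  Subtype.ext <| Finset.eq_univ_of_card _ <|
    (Set.powersetCard.card_eq I).trans (Fintype.card_fin g).symm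

theorem codegree_topIndex (e : Fin g → ℕ) : codegree e (topIndex g) = 0 := by
  simp [codegree, topIndex]

theorem pure_topIndex_surjective (z : KCochain N g g) :
    ∃ x, pure N g g x (extPowBasis g g (topIndex g)) = z := by
  obtain ⟨c, rfl⟩ := (ofCoeffs N g g).surjective z
  refine ⟨c (topIndex g), ?_⟩
  rw [← ofCoeffs_single]
  congr 1
  ext I
  rw [eq_topIndex I, Pi.single_eq_same]

theorem pure_topIndex_eq_zero {x : N} (h : pure N g g x (extPowBasis g g (topIndex g)) = 0) :
    x = 0 := by
  rw [← ofCoeffs_single, LinearEquiv.map_eq_zero_iff, Pi.single_eq_zero_iff] at h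
  exact h

theorem koszulDInto_zero (k : ℕ) : koszulDInto g (0 : Fin g → Module.End ℂ N) k = 0 := by
  cases k with
  | zero => rfl
  | succ k => exact hom_ext fun x p => by simp [koszulDInto, koszulD_pure]

theorem pure_topIndex_mem_range_iff (T : Fin g → Module.End ℂ N) (x : N) :
    pure N g g x (extPowBasis g g (topIndex g)) ∈ LinearMap.range (koszulDInto g T g) ↔
      x ∈ ⨆ j, LinearMap.range (T j) := by
  constructor
  · rintro ⟨z, hz⟩
    set W := ⨆ j, LinearMap.range (T j)
    have hmk (j : Fin g) (y : N) : W.mkQ (T j y) = (0 : Fin g → Module.End ℂ (N ⧸ W)) j (W.mkQ y) :=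
      (Submodule.Quotient.mk_eq_zero W).mpr (Submodule.mem_iSup_of_mem j ⟨y, rfl⟩)
    have h := koszulDInto_map hmk z
    rw [hz, mapCoeff_pure, koszulDInto_zero, LinearMap.zero_apply] at h
    exact (Submodule.Quotient.mk_eq_zero W).mp (pure_topIndex_eq_zero h.symm)
  · intro hx
    have hle : ⨆ j, LinearMap.range (T j) ≤ (LinearMap.range (koszulDInto g T g)).comap
        ((pure N g g).flip (extPowBasis g g (topIndex g))) := iSup_le fun j => by
      rintro _ ⟨u, rfl⟩
      obtain ⟨k, rfl⟩ : ∃ k, g = k + 1 := ⟨g - 1, by have := j.pos; omega⟩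
      refine ⟨pure N _ k u (contractBasis _ k j (extPowBasis _ _ (topIndex _))), ?_⟩
      change koszulD _ T k _ = pure N _ _ (T j u) _
      have hwedge (i : Fin (k + 1)) :
          wedgeBasis _ k i (contractBasis _ k j (extPowBasis _ _ (topIndex (k + 1)))) =
            if j = i then extPowBasis _ _ (topIndex (k + 1)) else 0 := by
        rw [← contractBasis_wedgeBasis_add, Subsingleton.elim (wedgeBasis _ (k + 1) i _) 0,
          map_zero, zero_add]
      simp only [koszulD_pure, hwedge, apply_ite, map_zero, Finset.sum_ite_eq, Finset.mem_univ,
        if_true]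
    exact hle hx

/-- The class of `x ⊗ (dz_1 ∧ ⋯ ∧ dz_g)`. -/
def koszulTop (g : ℕ) (T : Fin g → Module.End ℂ N) : N →ₗ[ℂ] KoszulH g T g :=
  koszulClass g T g ∘ₗ
    ((pure N g g).flip (extPowBasis g g (topIndex g))).codRestrict _ fun _ =>
      LinearMap.mem_ker.mpr (Subsingleton.elim _ _)

theorem koszulTop_surjective (T : Fin g → Module.End ℂ N) :
    Function.Surjective (koszulTop g T) := fun y => by
  obtain ⟨⟨z, hz⟩, rfl⟩ := koszulClass_surjective T g y
  obtain ⟨x, rfl⟩ := pure_topIndex_surjective z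
  exact ⟨x, rfl⟩

theorem ker_koszulTop (T : Fin g → Module.End ℂ N) :
    LinearMap.ker (koszulTop g T) = ⨆ j, LinearMap.range (T j) :=
  Submodule.ext fun x => koszulClass_eq_zero_iff.trans (pure_topIndex_mem_range_iff T x)

end TopDegree

variable {G : FiniteGrading ℂ N} {e : Fin g → ℕ} {T : Fin g → Module.End ℂ N}

/-- The grading of the cohomology of the Koszul complex of homogeneous operators. -/
def cohomologyGrading (hT : ∀ j, IsGraded (T j) (G.shift (e j)) G) (k : ℕ) :
    FiniteGrading ℂ (KoszulH g T k) :=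
  ((grading G e k).restrict _ (isGraded_koszulD hT k).proj_mem_ker).map (koszulClass g T k)
    (koszulClass_surjective T k) fun i _ hz =>
      koszulClass_eq_zero_iff.mpr
        ((isGraded_koszulDInto hT k).proj_mem_range i _ (koszulClass_eq_zero_iff.mp hz))

theorem isGraded_koszulTop (hT : ∀ j, IsGraded (T j) (G.shift (e j)) G) :
    IsGraded (koszulTop g T) G (cohomologyGrading hT g) := fun i x => by
  refine (isGraded_map ..).trans (congrArg (koszulClass g T g) (Subtype.ext ?_))
  refine (grading_proj_pure G e i _ x).trans ?_
  rw [codegree_topIndex]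
  rfl

theorem sum_range_neg_one_pow_mul_add_succ {A : Type*} [CommRing A] (b : ℕ → A) (n : ℕ) :
    ∑ k ∈ Finset.range n, (-1) ^ k * (b k + b (k + 1)) = b 0 - (-1) ^ n * b n := by
  induction n with
  | zero => simp
  | succ n ih => rw [Finset.sum_range_succ, ih]; ring

/-- The Hilbert series of the coboundaries in degree `k`. -/
def coboundarySeries (hT : ∀ j, IsGraded (T j) (G.shift (e j)) G) (k : ℕ) : PowerSeries ℚ :=
  ((grading G e k).restrict _ (isGraded_koszulDInto hT k).proj_mem_range).hilbertSeries

theorem coboundarySeries_zero (hT : ∀ j, IsGraded (T j) (G.shift (e j)) G) :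
    coboundarySeries hT 0 = 0 := by
  have : Subsingleton (LinearMap.range (koszulDInto g T 0)) :=
    Submodule.subsingleton_iff_eq_bot.mpr LinearMap.range_zero
  exact hilbertSeries_of_subsingleton _

theorem hilbertSeries_grading_eq_cohomology_add (hcomm : ∀ i j, Commute (T i) (T j))
    (hT : ∀ j, IsGraded (T j) (G.shift (e j)) G) (k : ℕ) :
    (grading G e k).hilbertSeries = (cohomologyGrading hT k).hilbertSeries +
      (coboundarySeries hT k + coboundarySeries hT (k + 1)) := by
  have hcocycles : ((grading G e k).restrict _ (isGraded_koszulD hT k).proj_mem_ker).hilbertSeries =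
      coboundarySeries hT k + (cohomologyGrading hT k).hilbertSeries :=
    hilbertSeries_eq_add_of_exact (f := Submodule.inclusion (range_koszulDInto_le_ker hcomm k))
      (fun _ _ => rfl) (isGraded_map _ _ _ _) (Submodule.inclusion_injective _)
      (koszulClass_surjective T k) fun z => koszulClass_eq_zero_iff.trans
        ⟨fun hz => ⟨⟨z, hz⟩, rfl⟩, fun ⟨y, hy⟩ => hy ▸ y.2⟩
  rw [(isGraded_koszulD hT k).hilbertSeries_eq_ker_add_range, hcocycles, add_right_comm, add_comm]
  rfl

theorem sum_hilbertSeries_cohomologyGrading (hcomm : ∀ i j, Commute (T i) (T j))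
    (hT : ∀ j, IsGraded (T j) (G.shift (e j)) G) :
    ∑ k ∈ Finset.range (g + 1), (-1) ^ k * (cohomologyGrading hT k).hilbertSeries =
      (-1) ^ g * (G.hilbertSeries * ∏ j, (1 - PowerSeries.X ^ e j)) := by
  have hcoboundaries : ∑ k ∈ Finset.range (g + 1),
      (-1) ^ k * (coboundarySeries hT k + coboundarySeries hT (k + 1)) = 0 := by
    rw [sum_range_neg_one_pow_mul_add_succ, coboundarySeries_zero,
      show coboundarySeries hT (g + 1) = 0 from hilbertSeries_of_subsingleton _, mul_zero, sub_zero]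
  calc ∑ k ∈ Finset.range (g + 1), (-1) ^ k * (cohomologyGrading hT k).hilbertSeries
      = ∑ k ∈ Finset.range (g + 1), (-1) ^ k * (grading G e k).hilbertSeries := by
        simp only [hilbertSeries_grading_eq_cohomology_add hcomm hT, mul_add _ (hilbertSeries _),
          Finset.sum_add_distrib, hcoboundaries, add_zero]
    _ = G.hilbertSeries * ∏ j, (PowerSeries.X ^ e j - 1) := by
        simp only [hilbertSeries_grading, ← mul_assoc, ← Finset.sum_mul,
          sum_neg_one_pow_mul_sum_pow_codegree, mul_comm G.hilbertSeries]
    _ = (-1) ^ g * (G.hilbertSeries * ∏ j, (1 - PowerSeries.X ^ e j)) := by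
        rw [mul_left_comm, ← Fin.prod_const, ← Finset.prod_mul_distrib]
        simp only [neg_one_mul, neg_sub]

theorem KoszulAcyclicBelow.hilbertSeries_eq {Q : Type*} [AddCommGroup Q] [Module ℂ Q]
    {H : FiniteGrading ℂ Q} {q : N →ₗ[ℂ] Q} (hacyclic : KoszulAcyclicBelow g T g)
    (hcomm : ∀ i j, Commute (T i) (T j)) (hT : ∀ j, IsGraded (T j) (G.shift (e j)) G)
    (hq : IsGraded q G H) (hsurj : Function.Surjective q)
    (hker : LinearMap.ker q = ⨆ j, LinearMap.range (T j)) :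
    H.hilbertSeries = G.hilbertSeries * ∏ j, (1 - PowerSeries.X ^ e j) := by
  have hzero (k : ℕ) (hk : k ∈ Finset.range g) :
      (-1) ^ k * (cohomologyGrading hT k).hilbertSeries = 0 := by
    have := hacyclic.subsingleton_koszulH (Finset.mem_range.mp hk)
    rw [hilbertSeries_of_subsingleton, mul_zero]
  have hsum := sum_hilbertSeries_cohomologyGrading hcomm hT
  rw [Finset.sum_range_succ, Finset.sum_eq_zero hzero, zero_add,
    ← hilbertSeries_eq_of_ker_eq hq (isGraded_koszulTop hT) hsurj (koszulTop_surjective T)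
      (hker.trans (ker_koszulTop T).symm)] at hsum
  exact (isUnit_one.neg.pow g).mul_left_cancel hsum

theorem exists_polynomial_eval_one_eq_sum_finrank_koszulH
    (hcomm : ∀ i j, Commute (T i) (T j)) (hT : ∀ j, IsGraded (T j) (G.shift (e j)) G)
    [∀ k, Module.Finite ℂ (KoszulH g T k)] :
    ∃ P : Polynomial ℚ, P = (-1) ^ g * (G.hilbertSeries * ∏ j, (1 - PowerSeries.X ^ e j)) ∧
      P.eval 1 =
        ∑ k ∈ Finset.range (g + 1), (-1 : ℚ) ^ k * (Module.finrank ℂ (KoszulH g T k) : ℚ) := by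
  choose p hp hp_eval using fun k => (cohomologyGrading hT k).exists_polynomial_hilbertSeries
  refine ⟨∑ k ∈ Finset.range (g + 1), (-1) ^ k * p k, ?_, ?_⟩
  · rw [← sum_hilbertSeries_cohomologyGrading hcomm hT]
    simp only [hp, ← Polynomial.coeToPowerSeries.ringHom_apply, map_sum, map_mul, map_pow, map_neg,
      map_one]
  · simp only [Polynomial.eval_finsetSum, Polynomial.eval_mul, Polynomial.eval_pow,
      Polynomial.eval_neg, Polynomial.eval_one, hp_eval]

end EulerCharacteristic

section WeightedPolynomials

open FiniteGrading

theorem FiniteGrading.isGraded_shift_of_homogeneous {K V W : Type*} [Field K] [AddCommGroup V]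
    [Module K V] [AddCommGroup W] [Module K W] {G : FiniteGrading K V} {H : FiniteGrading K W}
    {f : V →ₗ[K] W} {n : ℕ} (hf : ∀ i x, G.proj i x = x → H.proj (i + n) (f x) = f x) :
    IsGraded f (G.shift n) H := fun i x => by
  have hcomponent (j : ℕ) :
      H.proj i (f (G.proj j x)) = f ((G.shift n).proj i (G.proj j x)) := by
    rw [← hf j _ (G.proj_proj_self j x), H.proj_proj, hf j _ (G.proj_proj_self j x), shift_proj]
    split_ifs with hi hle hle
    · rw [hi, Nat.add_sub_cancel, G.proj_proj_self]
    · omega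
    · rw [G.proj_proj, if_neg (by omega), map_zero]
    · exact (map_zero f).symm
  obtain ⟨s, hs⟩ := G.exists_sum_proj x
  rw [← hs]
  simp only [map_sum, hcomponent]

section

variable {K σ ι : Type*} [Field K] {w : σ → ℕ} {f : ι → MvPolynomial σ K} {d : ι → ℕ}

theorem weightedHomogeneousComponent_mem_span (hf : ∀ j, (f j).IsWeightedHomogeneous w (d j))
    (i : ℕ) {x : MvPolynomial σ K} (hx : x ∈ Ideal.span (Set.range f)) :
    weightedHomogeneousComponent w i x ∈ Ideal.span (Set.range f) :=
  let := weightedGradedAlgebra K w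
  weightedHomogeneousComponent_mem_of_mem K w
    (Ideal.homogeneous_span _ _ (Set.forall_mem_range.mpr fun j => ⟨d j, hf j⟩)) hx i

variable [Finite σ] (hw : ∀ i, 0 < w i) (hf : ∀ j, (f j).IsWeightedHomogeneous w (d j))

variable (K) in
/-- The grading of a polynomial ring by weighted degree, for positive weights. -/
def weightedGrading : FiniteGrading K (MvPolynomial σ K) where
  proj := weightedHomogeneousComponent w
  proj_proj i j x := weightedHomogeneousComponent_of_mem (weightedHomogeneousComponent_mem w x j)
  exists_sum_proj x := ⟨(weightedHomogeneousComponent_finsupp x).toFinset,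
    (finsum_eq_sum _ _).symm.trans (sum_weightedHomogeneousComponent w x)⟩
  finite_range i := by
    have := Module.Finite.iff_fg.mpr (weightedHomogeneousSubmodule_fg K w (fun i => (hw i).ne') i)
    have hle : LinearMap.range (weightedHomogeneousComponent w i) ≤
        weightedHomogeneousSubmodule K w i := by
      rintro _ ⟨x, rfl⟩
      exact weightedHomogeneousComponent_mem w x i
    exact Module.Finite.of_injective _ (Submodule.inclusion_injective hle)

theorem weightedGrading_proj_eq_self_iff {i : ℕ} {x : MvPolynomial σ K} :
    (weightedGrading K hw).proj i x = x ↔ x.IsWeightedHomogeneous w i :=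
  ⟨fun h => h ▸ weightedHomogeneousComponent_isWeightedHomogeneous i x,
    weightedHomogeneousComponent_eq_self⟩

/-- The grading of the quotient of a polynomial ring by weighted-homogeneous polynomials. -/
def quotientGrading : FiniteGrading K (MvPolynomial σ K ⧸ Ideal.span (Set.range f)) :=
  (weightedGrading K hw).map (Ideal.Quotient.mkₐ K (Ideal.span (Set.range f))).toLinearMap
    Ideal.Quotient.mk_surjective fun i _ hx => Ideal.Quotient.eq_zero_iff_mem.mpr
      (weightedHomogeneousComponent_mem_span hf i (Ideal.Quotient.eq_zero_iff_mem.mp hx))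

theorem isGraded_quotientMk :
    IsGraded (Ideal.Quotient.mkₐ K (Ideal.span (Set.range f))).toLinearMap (weightedGrading K hw)
      (quotientGrading hw hf) :=
  isGraded_map _ _ _ _

theorem isGraded_lsmul {a : MvPolynomial σ K} {n : ℕ} (ha : a.IsWeightedHomogeneous w n) :
    IsGraded (Algebra.lsmul K K (MvPolynomial σ K) a) ((weightedGrading K hw).shift n)
      (weightedGrading K hw) :=
  isGraded_shift_of_homogeneous fun i _ hx => (weightedGrading_proj_eq_self_iff hw).mpr
    (add_comm n i ▸ ha.mul ((weightedGrading_proj_eq_self_iff hw).mp hx))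

theorem isGraded_quotientGrading {T : Module.End K (MvPolynomial σ K ⧸ Ideal.span (Set.range f))}
    {n : ℕ} (hT : ∀ i x, x.IsWeightedHomogeneous w i → ∃ y, y.IsWeightedHomogeneous w (i + n) ∧
      T (Ideal.Quotient.mk _ x) = Ideal.Quotient.mk _ y) :
    IsGraded T ((quotientGrading hw hf).shift n) (quotientGrading hw hf) :=
  isGraded_shift_of_homogeneous fun i z hz => by
    obtain ⟨x, rfl⟩ := Ideal.Quotient.mk_surjective z
    obtain ⟨y, hy, hxy⟩ := hT i _ (weightedHomogeneousComponent_isWeightedHomogeneous i x)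
    have hxz : Ideal.Quotient.mk _ (weightedHomogeneousComponent w i x) = Ideal.Quotient.mk _ x :=
      (isGraded_quotientMk hw hf i x).symm.trans hz
    rw [← hxz, hxy]
    exact (isGraded_quotientMk hw hf (i + n) y).trans
      (congrArg _ (weightedHomogeneousComponent_eq_self hy))

end

theorem iSup_range_lsmul {A R ι : Type*} [CommRing A] [CommRing R] [Algebra A R] (f : ι → R) :
    ⨆ j, LinearMap.range (Algebra.lsmul A A R (f j)) =
      LinearMap.ker (Ideal.Quotient.mkₐ A (Ideal.span (Set.range f))).toLinearMap := by
  refine le_antisymm (iSup_le fun j => ?_) fun x hx => ?_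
  · rintro _ ⟨x, rfl⟩
    exact Ideal.Quotient.eq_zero_iff_mem.mpr
      (Ideal.mul_mem_right _ _ (Ideal.subset_span ⟨j, rfl⟩))
  · replace hx := Ideal.Quotient.eq_zero_iff_mem.mp hx
    rw [Ideal.span, Submodule.span_range_eq_iSup] at hx
    induction hx using Submodule.iSup_induction' with
    | mem j y hy =>
      obtain ⟨r, rfl⟩ := Ideal.mem_span_singleton.mp hy
      exact Submodule.mem_iSup_of_mem j ⟨r, rfl⟩
    | zero => exact zero_mem _
    | add _ _ _ _ hy hz => exact add_mem hy hz

variable {m c g : ℕ} {w : Fin m → ℕ} (hw : ∀ i, 0 < w i)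

theorem hilbertSeries_quotientGrading (hcg : c + g = m) {f : Fin c → MvPolynomial (Fin m) ℂ}
    {d : Fin c → ℕ} (hf : ∀ j, (f j).IsWeightedHomogeneous w (d j))
    (hdim : ringKrullDim (MvPolynomial (Fin m) ℂ ⧸ Ideal.span (Set.range f)) ≤ g) :
    (quotientGrading hw hf).hilbertSeries =
      (weightedGrading ℂ hw).hilbertSeries * ∏ j, (1 - PowerSeries.X ^ d j) := by
  obtain ⟨rs, rfl, hrs, hreg⟩ := exists_isWeaklyRegular_of_ringKrullDim_quotient_le hcg _ hdim
  exact (koszulAcyclicBelow_of_isWeaklyRegular f hrs _ hreg).hilbertSeries_eq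
    (fun i j => (Commute.all (f i) (f j)).map _) (fun j => isGraded_lsmul hw (hf j))
    (isGraded_quotientMk hw hf) Ideal.Quotient.mk_surjective (iSup_range_lsmul f).symm

end WeightedPolynomials

section Multiplicity

theorem one_sub_X_pow_prod_eq {R ι : Type*} [CommRing R] [Fintype ι] (a : ι → ℕ) :
    ∏ i, (1 - Polynomial.X ^ a i : Polynomial R) = (1 - Polynomial.X) ^ Fintype.card ι *
      ∏ i, ∑ n ∈ Finset.range (a i), Polynomial.X ^ n := by
  rw [← Finset.card_univ, ← Finset.prod_const, ← Finset.prod_mul_distrib]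
  exact Finset.prod_congr rfl fun i _ => (mul_neg_geom_sum _ _).symm

theorem eval_one_mul_prod_eq_of_mul_prod_one_sub_X_pow_eq {R ι κ : Type*} [CommRing R] [IsDomain R]
    [Fintype ι] [Fintype κ] (hcard : Fintype.card ι = Fintype.card κ) {a : ι → ℕ} {b : κ → ℕ}
    {p q : Polynomial R}
    (h : p * ∏ i, (1 - Polynomial.X ^ a i) = q * ∏ j, (1 - Polynomial.X ^ b j)) :
    p.eval 1 * ∏ i, (a i : R) = q.eval 1 * ∏ j, (b j : R) := by
  have hne : (1 - Polynomial.X : Polynomial R) ^ Fintype.card κ ≠ 0 :=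
    pow_ne_zero _ (sub_ne_zero.mpr fun h => Polynomial.X_ne_C (1 : R) h.symm)
  rw [one_sub_X_pow_prod_eq, one_sub_X_pow_prod_eq, hcard, mul_left_comm, mul_left_comm q] at h
  simpa [Polynomial.eval_prod, Polynomial.eval_finsetSum] using
    congrArg (Polynomial.eval 1) (mul_left_cancel₀ hne h)

theorem exists_polynomial_hilbertSeries_weightedGrading {m : ℕ} {w : Fin m → ℕ}
    (hw : ∀ i, 0 < w i) :
    ∃ p : Polynomial ℚ, p = (weightedGrading ℂ hw).hilbertSeries * ∏ i, (1 - PowerSeries.X ^ w i) ∧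
      p.eval 1 = 1 := by
  have hdim : ringKrullDim (MvPolynomial (Fin m) ℂ ⧸
      Ideal.span (Set.range (X : Fin m → MvPolynomial (Fin m) ℂ))) ≤ (0 : ℕ) := by
    rw [ringKrullDim_eq_of_ringEquiv (quotientSpanRangeXEquiv ℂ (Fin m)).toRingEquiv,
      ringKrullDim_eq_zero_of_field, Nat.cast_zero]
  have hX (i : Fin m) := isWeightedHomogeneous_X ℂ w i
  obtain ⟨p, hp, hp_eval⟩ := (quotientGrading hw hX).exists_polynomial_hilbertSeries
  refine ⟨p, ?_, ?_⟩
  · rw [← hp, hilbertSeries_quotientGrading hw (add_zero m) hX hdim]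
  · rw [hp_eval, (quotientSpanRangeXEquiv ℂ (Fin m)).toLinearEquiv.finrank_eq, Module.finrank_self,
      Nat.cast_one]

end Multiplicity

theorem statement9_general {m g c : ℕ} (hcg : c + g = m) (w : Fin m → ℕ) (hw : ∀ i, 0 < w i)
    (f : Fin c → MvPolynomial (Fin m) ℂ) (d : Fin c → ℕ)
    (hf : ∀ j, (f j).IsWeightedHomogeneous w (d j))
    (hdim : ringKrullDim (MvPolynomial (Fin m) ℂ ⧸ Ideal.span (Set.range f)) ≤ g)
    (e : Fin g → ℕ) (he : ∀ j, 0 < e j)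
    (T : Fin g → Module.End ℂ (MvPolynomial (Fin m) ℂ ⧸ Ideal.span (Set.range f)))
    (hcomm : ∀ i j, Commute (T i) (T j))
    (hT : ∀ j n x, x.IsWeightedHomogeneous w n → ∃ y, y.IsWeightedHomogeneous w (n + e j) ∧
      T j (Ideal.Quotient.mk _ x) = Ideal.Quotient.mk _ y)
    (hfin : FiniteDimensional ℂ ((MvPolynomial (Fin m) ℂ ⧸ Ideal.span (Set.range f)) ⧸
      ⨆ j, LinearMap.range (T j))) :
    (∀ k, FiniteDimensional ℂ (KoszulH g T k)) ∧
      ∑ k ∈ Finset.range (g + 1), (-1 : ℚ) ^ k * (Module.finrank ℂ (KoszulH g T k) : ℚ) =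
        (-1 : ℚ) ^ g * ((∏ j, (d j : ℚ)) * ∏ j, (e j : ℚ)) / ∏ i, (w i : ℚ) := by
  have hgraded (j : Fin g) := isGraded_quotientGrading hw hf (hT j)
  have hH (k : ℕ) : Module.Finite ℂ (KoszulH g T k) :=
    finite_koszulH (quotientGrading hw hf) hcomm he hgraded k
  refine ⟨hH, ?_⟩
  obtain ⟨P, hP, hP_eval⟩ := exists_polynomial_eval_one_eq_sum_finrank_koszulH hcomm hgraded
  obtain ⟨p, hp, hp_eval⟩ := exists_polynomial_hilbertSeries_weightedGrading hw
  have hPp : P * ∏ i, (1 - Polynomial.X ^ w i) =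
      ((-1) ^ g * p) * ∏ j, (1 - Polynomial.X ^ Sum.elim d e j) := by
    rw [hilbertSeries_quotientGrading hw hcg hf hdim] at hP
    apply Polynomial.coe_injective
    simp only [Fintype.prod_sum_type, Sum.elim_inl, Sum.elim_inr,
      ← Polynomial.coeToPowerSeries.ringHom_apply, map_mul, map_prod, map_sub, map_one, map_pow,
      map_neg] at hP hp ⊢
    rw [hP, hp]
    simp only [Polynomial.coeToPowerSeries.ringHom_apply, Polynomial.coe_X]
    ring
  have hcard : Fintype.card (Fin m) = Fintype.card (Fin c ⊕ Fin g) := by simp [hcg]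
  have heval := eval_one_mul_prod_eq_of_mul_prod_one_sub_X_pow_eq hcard hPp
  rw [eq_div_iff (Finset.prod_ne_zero_iff.mpr fun i _ => Nat.cast_ne_zero.mpr (hw i).ne'),
    ← hP_eval, heval]
  simp [hp_eval]

/-- With `R = ℂ[a_1,…,a_m]` graded by positive weights `w`, `g ≤ m`,
`f_1,…,f_{m−g}` weighted-homogeneous of positive degrees `d_j` with `dim R/(f) ≤ g`,
`D_1,…,D_g` pairwise commuting ℂ-derivations of `R`, homogeneous of positive degrees `e_j`,
killing the `f_k`, hence inducing operators `T_j` on `A_0 = R/(f_1,…,f_{m−g})`: if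
`H^g(C_0^•) = A_0/(D_1A_0 + ⋯ + D_gA_0)` is finite-dimensional over ℂ (Assumption 1), then
every `H^k(C_0^•)`, `0 ≤ k ≤ g`, is finite-dimensional over ℂ, and
`Σ_k (−1)^k dim H^k(C_0^•) = (−1)^g (∏ d_j)(∏ e_j)/(∏ w_i)`. -/
theorem statement9 (m g : ℕ) (hg : g ≤ m) (w : Fin m → ℕ) (hw : ∀ i, 0 < w i)
    (f : Fin (m - g) → MvPolynomial (Fin m) ℂ) (d : Fin (m - g) → ℕ) (hd : ∀ j, 0 < d j)
    (hf : ∀ j, (f j).IsWeightedHomogeneous w (d j))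
    (hdim : ringKrullDim (MvPolynomial (Fin m) ℂ ⧸ Ideal.span (Set.range f)) ≤
      (g : WithBot (WithTop ℕ)))
    (D : Fin g → Derivation ℂ (MvPolynomial (Fin m) ℂ) (MvPolynomial (Fin m) ℂ))
    (e : Fin g → ℕ) (he : ∀ j, 0 < e j)
    (hDhom : ∀ (j : Fin g) (n : ℕ) (x : MvPolynomial (Fin m) ℂ),
      x.IsWeightedHomogeneous w n → (D j x).IsWeightedHomogeneous w (n + e j))
    (hDcomm : ∀ (i j : Fin g) (x : MvPolynomial (Fin m) ℂ), D i (D j x) = D j (D i x))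
    (hDf : ∀ (j : Fin g) (k : Fin (m - g)), D j (f k) = 0)
    (T : Fin g → Module.End ℂ (MvPolynomial (Fin m) ℂ ⧸ Ideal.span (Set.range f)))
    (hT : ∀ (j : Fin g) (x : MvPolynomial (Fin m) ℂ),
      T j (Ideal.Quotient.mk (Ideal.span (Set.range f)) x) =
        Ideal.Quotient.mk (Ideal.span (Set.range f)) (D j x))
    (hfin : FiniteDimensional ℂ
      ((MvPolynomial (Fin m) ℂ ⧸ Ideal.span (Set.range f)) ⧸
        (⨆ j : Fin g, LinearMap.range (T j)))) :
    (∀ k ≤ g, FiniteDimensional ℂ (KoszulH g T k)) ∧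
      ∑ k ∈ Finset.range (g + 1), (-1 : ℚ) ^ k * (Module.finrank ℂ (KoszulH g T k) : ℚ) =
        (-1 : ℚ) ^ g * ((∏ j : Fin (m - g), (d j : ℚ)) * ∏ j : Fin g, (e j : ℚ)) /
          ∏ i : Fin m, (w i : ℚ) := by
  have hcomm (i j : Fin g) : Commute (T i) (T j) := LinearMap.ext fun y => by
    obtain ⟨x, rfl⟩ := Ideal.Quotient.mk_surjective y
    simp only [Module.End.mul_apply, hT, hDcomm i j]
  obtain ⟨hH, heuler⟩ := statement9_general (Nat.sub_add_cancel hg) w hw f d hf hdim e he T hcomm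
    (fun j n x hx => ⟨D j x, hDhom j n x hx, hT j x⟩) hfin
  exact ⟨fun k _ => hH k, heuler⟩

end
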